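/- arXiv:math/0611047 — 3 statements merged into one kernel-verified Lean document; each statement's English description precedes it below -/
import Mathlib

section
/- A system of parameters x_1,...,x_d in a Noetherian local ring (R,m) is a standard system of parameters if and only if it is an unconditioned strong d-sequence, i.e., every permutation of x_1^{m_1},...,x_d^{m_d} is a d-sequence for all exponents m_i ≥ 1. -/
universe u

open IsLocalRing

/-- `y_1,…,y_n` is a d-sequence: `(y_1,…,y_i) : y_{i+1}y_k = (y_1,…,y_i) : y_k`
for all `0 ≤ i ≤ n-1` and `k > i` (0-indexed: `k ≥ i`). -/
def IsDSequence {R : Type u} [CommRing R] {n : ℕ} (y : Fin n → R) : Prop :=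
  ∀ (i : ℕ) (hi : i < n) (k : Fin n), i ≤ (k : ℕ) →
    (Ideal.span (y '' {j : Fin n | (j : ℕ) < i})).colon (Ideal.span {y ⟨i, hi⟩ * y k}) =
      (Ideal.span (y '' {j : Fin n | (j : ℕ) < i})).colon (Ideal.span {y k})

/-- `y_1,…,y_n` is an unconditioned strong d-sequence: every permutation of
`y_1^{m_1},…,y_n^{m_n}` is a d-sequence for all exponents `m_i ≥ 1`. -/
def IsUSDSequence {R : Type u} [CommRing R] {n : ℕ} (y : Fin n → R) : Prop :=
  ∀ (m : Fin n → ℕ), (∀ j, 1 ≤ m j) → ∀ σ : Equiv.Perm (Fin n),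
    IsDSequence (fun j => y (σ j) ^ m (σ j))

/-- `x_1,…,x_d` is a standard system of parameters:
`(x_1,…,x_d)·H_𝔪^j(R/(x_1,…,x_{i-1})) = 0` for all `i ≥ 1`, `i + j ≤ d`. -/
def IsStandardSOP {R : Type u} [CommRing R] [IsLocalRing R] {d : ℕ} (x : Fin d → R) : Prop :=
  ∀ i j : ℕ, 1 ≤ i → i + j ≤ d → ∀ r ∈ Ideal.span (Set.range x),
    ∀ m : ((localCohomology (maximalIdeal R) j).obj
      (ModuleCat.of R (R ⧸ Ideal.span (x '' {k : Fin d | (k : ℕ) < i - 1})))),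
      r • m = 0

namespace LC
open CategoryTheory CategoryTheory.Abelian

variable {R : Type u} [CommRing R]

/-- The module `R/J^n`. -/
noncomputable abbrev X (J : Ideal R) (n : ℕ) : ModuleCat.{u} R := ModuleCat.of R (R ⧸ J ^ n)

/-- The projection `R/J^n' → R/J^n`. -/
noncomputable def res (J : Ideal R) {n n' : ℕ} (h : n ≤ n') : X J n' ⟶ X J n :=
  ModuleCat.ofHom (Submodule.mapQ (J ^ n') (J ^ n) LinearMap.id (Ideal.pow_le_pow_right h))

lemma res_self (J : Ideal R) {n : ℕ} (h : n ≤ n) : res J h = 𝟙 _ := by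
  apply ModuleCat.hom_ext
  apply Submodule.linearMap_qext
  ext
  rfl

lemma res_comp (J : Ideal R) {a b c : ℕ} (h : a ≤ b) (h' : b ≤ c) :
    res J h' ≫ res J h = res J (h.trans h') := by
  apply ModuleCat.hom_ext
  apply Submodule.linearMap_qext
  ext
  rfl

/-- transition maps -/
noncomputable def tr (J : Ideal R) (j : ℕ) (M : ModuleCat.{u} R) (n n' : ℕ) (h : n ≤ n') :
    Ext.{u} (X J n) M j →ₗ[R] Ext.{u} (X J n') M j :=
  Ext.precompOfLinear (Ext.mk₀ (res J h)) R M (zero_add j)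

lemma tr_apply (J : Ideal R) (j : ℕ) (M : ModuleCat.{u} R) (n n' : ℕ) (h : n ≤ n')
    (x : Ext.{u} (X J n) M j) : tr J j M n n' h x = (Ext.mk₀ (res J h)).comp x (zero_add j) := rfl

instance (J : Ideal R) (j : ℕ) (M : ModuleCat.{u} R) :
    DirectedSystem (fun n => Ext.{u} (X J n) M j) (fun n n' h => tr J j M n n' h) where
  map_self n x := by
    simp [tr_apply, res_self]
  map_map k i j' h h' x := by
    simp only [tr_apply]
    rw [← Ext.comp_assoc_of_second_deg_zero, Ext.mk₀_comp_mk₀, res_comp]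

/-- local cohomology with derived-category Ext -/
abbrev H (J : Ideal R) (j : ℕ) (M : ModuleCat.{u} R) : Type u :=
  Module.DirectLimit (fun n => Ext.{u} (X J n) M j) (fun n n' h => tr J j M n n' h)

/-- class of an Ext element -/
noncomputable def of (J : Ideal R) (j : ℕ) (M : ModuleCat.{u} R) (n : ℕ) :
    Ext.{u} (X J n) M j →ₗ[R] H J j M :=
  Module.DirectLimit.of R ℕ (fun n => Ext.{u} (X J n) M j) (fun n n' h => tr J j M n n' h) n

lemma exists_of {J : Ideal R} {j : ℕ} {M : ModuleCat.{u} R} (z : H J j M) :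
    ∃ n x, of J j M n x = z := Module.DirectLimit.exists_of z

lemma of_tr {J : Ideal R} {j : ℕ} {M : ModuleCat.{u} R} {n n' : ℕ} (h : n ≤ n')
    (x : Ext.{u} (X J n) M j) : of J j M n' (tr J j M n n' h x) = of J j M n x :=
  Module.DirectLimit.of_f (f := fun n n' h => tr J j M n n' h)

lemma of_zero_exact {J : Ideal R} {j : ℕ} {M : ModuleCat.{u} R} {n : ℕ}
    (x : Ext.{u} (X J n) M j) (hx : of J j M n x = 0) : ∃ n', ∃ h : n ≤ n', tr J j M n n' h x = 0 :=
  Module.DirectLimit.of.zero_exact (f := fun n n' h => tr J j M n n' h) hx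

/-- postcomposition by an Ext class -/
noncomputable def post (J : Ideal R) {M N : ModuleCat.{u} R} {a : ℕ} (α : Ext.{u} M N a)
    {j j' : ℕ} (h : j + a = j') : H J j M →ₗ[R] H J j' N :=
  Module.DirectLimit.map (f := fun n n' h => tr J j M n n' h)
    (f' := fun n n' h => tr J j' N n n' h) (fun n => Ext.postcompOfLinear α R (X J n) h) (by
    intro n n' hn
    ext x
    simp [tr]
    rw [Ext.comp_assoc]
    omega)

lemma post_of {J : Ideal R} {M N : ModuleCat.{u} R} {a : ℕ} (α : Ext.{u} M N a)
    {j j' : ℕ} (h : j + a = j') (n : ℕ) (x : Ext.{u} (X J n) M j) :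
    post J α h (of J j M n x) = of J j' N n (x.comp α h) :=
  Module.DirectLimit.map_apply_of (f := fun n n' h => tr J j M n n' h)
    (f' := fun n n' h => tr J j' N n n' h) (fun n => Ext.postcompOfLinear α R (X J n) h) _ x

/-- functoriality -/
noncomputable def map (J : Ideal R) (j : ℕ) {M N : ModuleCat.{u} R} (f : M ⟶ N) :
    H J j M →ₗ[R] H J j N := post J (Ext.mk₀ f) (add_zero j)

lemma map_comp (J : Ideal R) (j : ℕ) {M N K : ModuleCat.{u} R} (f : M ⟶ N) (g : N ⟶ K)
    (z : H J j M) : map J j (f ≫ g) z = map J j g (map J j f z) := by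
  obtain ⟨n, x, rfl⟩ := exists_of z
  simp only [map, post_of]
  rw [Ext.comp_assoc_of_second_deg_zero, Ext.mk₀_comp_mk₀]

lemma map_smul_id (J : Ideal R) (j : ℕ) {M : ModuleCat.{u} R} (r : R)
    (z : H J j M) : map J j (r • 𝟙 M) z = r • z := by
  obtain ⟨n, x, rfl⟩ := exists_of z
  simp only [map, post_of, ← LinearMap.map_smul]
  rw [Ext.smul_eq_comp_mk₀]

lemma map_zero (J : Ideal R) (j : ℕ) {M N : ModuleCat.{u} R}
    (z : H J j M) : map J j (0 : M ⟶ N) z = 0 := by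
  obtain ⟨n, x, rfl⟩ := exists_of z
  simp only [map, post_of]
  simp

/-- if `r M = 0` then `r H = 0` -/
lemma smul_eq_zero_of_ann (J : Ideal R) (j : ℕ) {M : ModuleCat.{u} R} (r : R)
    (hr : ∀ a : M, r • a = 0) (z : H J j M) : r • z = 0 := by
  rw [← map_smul_id]
  have : r • 𝟙 M = 0 := by
    ext a
    exact hr a
  rw [this, map_zero]

/-- connecting map -/
noncomputable def δ (J : Ideal R) {S : ShortComplex (ModuleCat.{u} R)} (hS : S.ShortExact) (j : ℕ) :
    H J j S.X₃ →ₗ[R] H J (j+1) S.X₁ := post J hS.extClass rfl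

lemma exact₂ (J : Ideal R) {S : ShortComplex (ModuleCat.{u} R)} (hS : S.ShortExact) (j : ℕ)
    (z : H J j S.X₂) (hz : map J j S.g z = 0) : ∃ w, map J j S.f w = z := by
  obtain ⟨n, x, rfl⟩ := exists_of z
  rw [map, post_of] at hz
  obtain ⟨n', h, hx⟩ := of_zero_exact _ hz
  rw [tr_apply, ← Ext.comp_assoc_of_third_deg_zero] at hx
  obtain ⟨y, hy⟩ := Ext.covariant_sequence_exact₂ _ hS _ hx
  refine ⟨of _ _ _ n' y, ?_⟩
  rw [map, post_of, hy, ← of_tr h x]; rfl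

lemma exact₃ (J : Ideal R) {S : ShortComplex (ModuleCat.{u} R)} (hS : S.ShortExact) (j : ℕ)
    (z : H J j S.X₃) (hz : δ J hS j z = 0) : ∃ w, map J j S.g w = z := by
  obtain ⟨n, x, rfl⟩ := exists_of z
  rw [δ, post_of] at hz
  obtain ⟨n', h, hx⟩ := of_zero_exact _ hz
  rw [tr_apply, ← Ext.comp_assoc _ _ _ (zero_add j) rfl (by omega)] at hx
  obtain ⟨y, hy⟩ := Ext.covariant_sequence_exact₃ _ hS _ rfl hx
  refine ⟨of _ _ _ n' y, ?_⟩
  rw [map, post_of, hy, ← of_tr h x]; rfl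

lemma exact₁ (J : Ideal R) {S : ShortComplex (ModuleCat.{u} R)} (hS : S.ShortExact) (j : ℕ)
    (z : H J (j+1) S.X₁) (hz : map J (j+1) S.f z = 0) : ∃ w, δ J hS j w = z := by
  obtain ⟨n, x, rfl⟩ := exists_of z
  rw [map, post_of] at hz
  obtain ⟨n', h, hx⟩ := of_zero_exact _ hz
  rw [tr_apply, ← Ext.comp_assoc_of_third_deg_zero] at hx
  obtain ⟨y, hy⟩ := Ext.covariant_sequence_exact₁ _ hS _ hx rfl
  refine ⟨of _ _ _ n' y, ?_⟩
  rw [δ, post_of, hy, ← of_tr h x]; rfl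

lemma map_δ (J : Ideal R) {S : ShortComplex (ModuleCat.{u} R)} (hS : S.ShortExact) (j : ℕ)
    (z : H J j S.X₃) : map J (j+1) S.f (δ J hS j z) = 0 := by
  obtain ⟨n, x, rfl⟩ := exists_of z
  rw [map, δ, post_of, post_of, Ext.comp_assoc_of_third_deg_zero, hS.extClass_comp]
  simp

lemma δ_nat (J : Ideal R) {S T : ShortComplex (ModuleCat.{u} R)} (hS : S.ShortExact)
    (hT : T.ShortExact) (f : S ⟶ T) (j : ℕ) (z : H J j S.X₃) :
    δ J hT j (map J j f.τ₃ z) = map J (j+1) f.τ₁ (δ J hS j z) := by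
  obtain ⟨n, x, rfl⟩ := exists_of z
  rw [map, δ, δ, map, post_of, post_of, post_of, post_of, Ext.comp_assoc_of_third_deg_zero,
    Ext.comp_assoc_of_second_deg_zero, ShortComplex.ShortExact.extClass_naturality hS hT]

/-- elements are torsion -/
lemma torsion (J : Ideal R) (j : ℕ) (M : ModuleCat.{u} R) (z : H J j M) :
    ∃ n, ∀ r ∈ J ^ n, r • z = 0 := by
  obtain ⟨n, x, rfl⟩ := exists_of z
  refine ⟨n, fun r hr => ?_⟩
  have : r • 𝟙 (X J n) = 0 := by
    apply ModuleCat.hom_ext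
    apply Submodule.linearMap_qext
    ext
    change (r • (Submodule.Quotient.mk (1:R)) : R ⧸ J ^ n) = 0
    rw [← Submodule.Quotient.mk_smul, Submodule.Quotient.mk_eq_zero]
    simpa using hr
  rw [← LinearMap.map_smul]
  have h2 : r • x = (Ext.mk₀ (r • 𝟙 (X J n))).comp x (zero_add j) := by simp [Ext.mk₀_smul]
  rw [h2, this]
  simp

/-- H^0 kills iff -/
lemma kill_zero_iff (J : Ideal R) (M : ModuleCat.{u} R) (r : R) :
    (∀ z : H J 0 M, r • z = 0) ↔ ∀ a : M, (∃ n, ∀ s ∈ J ^ n, s • a = 0) → r • a = 0 := by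
  constructor
  · rintro h a ⟨n, ha⟩
    let f : X J n ⟶ M := ModuleCat.ofHom ((J ^ n).liftQ (LinearMap.toSpanSingleton R M a) (by
      intro s hs
      exact ha s hs))
    have h1 := h (of J 0 M n (Ext.mk₀ f))
    rw [← LinearMap.map_smul] at h1
    obtain ⟨n', hn, hx⟩ := of_zero_exact _ h1
    rw [tr_apply, ← Ext.mk₀_smul, Ext.mk₀_comp_mk₀, Ext.mk₀_eq_zero_iff] at hx
    have := congrArg (fun g => g.hom (Submodule.Quotient.mk (1 : R))) hx
    have h3 : (res J hn ≫ (r • f)).hom (Submodule.Quotient.mk (1 : R)) = r • a := by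
      change r • ((1:R) • a) = _
      rw [one_smul]
    rw [← h3]
    exact this
  · intro h z
    obtain ⟨n, x, rfl⟩ := exists_of z
    obtain ⟨f, rfl⟩ := Ext.homEquiv₀.symm.surjective x
    simp only [Ext.homEquiv₀_symm_apply]
    rw [← LinearMap.map_smul, ← Ext.mk₀_smul]
    have : r • f = 0 := by
      apply ModuleCat.hom_ext
      apply Submodule.linearMap_qext
      ext
      change r • f.hom (Submodule.Quotient.mk (1 : R)) = 0
      apply h
      refine ⟨n, fun s hs => ?_⟩
      rw [← _root_.map_smul]
      have : (s • (Submodule.Quotient.mk (1:R)) : R ⧸ J ^ n) = 0 := by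
        rw [← Submodule.Quotient.mk_smul, Submodule.Quotient.mk_eq_zero]
        simpa using hs
      erw [this]
      simp
    rw [this]
    simp

end LC

namespace LC
open CategoryTheory CategoryTheory.Abelian

variable {R : Type u} [CommRing R]

section van
variable {F N F' N' : Type u} [AddCommGroup F] [Module R F] [AddCommGroup N] [Module R N]
  [AddCommGroup F'] [Module R F'] [AddCommGroup N'] [Module R N']

/-- map on kernels -/
def kerMap (g : F →ₗ[R] N) (g' : F' →ₗ[R] N') (a : F' →ₗ[R] F) (b : N' →ₗ[R] N)
    (h : g ∘ₗ a = b ∘ₗ g') : LinearMap.ker g' →ₗ[R] LinearMap.ker g :=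
  a.restrict (by
    intro v hv
    have := LinearMap.congr_fun h v
    simp only [LinearMap.mem_ker] at hv ⊢
    simpa [hv] using this)

lemma key (g : F →ₗ[R] N) (g' : F' →ₗ[R] N') (a : F' →ₗ[R] F) (b : N' →ₗ[R] N)
    (h : g ∘ₗ a = b ∘ₗ g') (hg : Function.Surjective g) (hg' : Function.Surjective g')
    (A : ModuleCat.{u} R) (j : ℕ) (y : Ext.{u} (ModuleCat.of R (LinearMap.ker g)) A j)
    (hy : (Ext.mk₀ (ModuleCat.ofHom (kerMap g g' a b h))).comp y (zero_add j) = 0) :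
    (Ext.mk₀ (ModuleCat.ofHom b)).comp
      ((LinearMap.shortExact_shortComplexKer hg).extClass.comp y (add_comm 1 j)) (zero_add _) = 0 := by
  let φ : g'.shortComplexKer ⟶ g.shortComplexKer :=
    { τ₁ := ModuleCat.ofHom (kerMap g g' a b h)
      τ₂ := ModuleCat.ofHom a
      τ₃ := ModuleCat.ofHom b
      comm₁₂ := by ext; rfl
      comm₂₃ := by
        apply ModuleCat.hom_ext
        exact h }
  have := ShortComplex.ShortExact.extClass_naturality (LinearMap.shortExact_shortComplexKer hg')
    (LinearMap.shortExact_shortComplexKer hg) φ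
  rw [← Ext.comp_assoc _ _ _ (zero_add 1) (add_comm 1 j) (by omega)]
  refine (congrArg (fun t => Ext.comp t y (add_comm 1 j)) this.symm).trans ?_
  rw [Ext.comp_assoc _ _ _ (add_zero 1) (zero_add j) (by omega)]
  refine (congrArg (fun t => Ext.comp _ t (add_comm 1 j)) hy).trans ?_
  simp

end van

lemma van_aux [IsNoetherianRing R] (J : Ideal R) (k : ℕ) (A : ModuleCat.{u} R)
    (hA : ∀ r ∈ J ^ k, ∀ a : A, r • a = 0) (j : ℕ) :
    ∀ (N : Type u) [AddCommGroup N] [Module R N] [Module.Finite R N], ∃ t : ℕ,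
      ∀ (P : Type u) [AddCommGroup P] [Module R P] (f : P →ₗ[R] N),
        (∀ p, f p ∈ J ^ t • (⊤ : Submodule R N)) →
        ∀ ξ : Ext.{u} (ModuleCat.of R N) A j,
          (Ext.mk₀ (ModuleCat.ofHom f)).comp ξ (zero_add j) = 0 := by
  induction j with
  | zero =>
    intro N _ _ _
    refine ⟨k, fun P _ _ f hf ξ => ?_⟩
    obtain ⟨g, rfl⟩ := Ext.homEquiv₀.symm.surjective ξ
    simp only [Ext.homEquiv₀_symm_apply]
    rw [Ext.mk₀_comp_mk₀]
    have : ModuleCat.ofHom f ≫ g = 0 := by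
      apply ModuleCat.hom_ext
      ext p
      change g.hom (f p) = 0
      refine Submodule.smul_induction_on (hf p) ?_ ?_
      · intro r hr n _
        rw [LinearMap.map_smul]
        exact hA r hr _
      · intro x y hx hy
        rw [_root_.map_add, hx, hy, add_zero]
    rw [this]; simp
  | succ j ih =>
    intro N _ _ _
    obtain ⟨n, g, hg⟩ := Module.Finite.exists_fin' R N
    obtain ⟨s, hs⟩ := ih (LinearMap.ker g)
    obtain ⟨c, hc⟩ := Ideal.exists_pow_inf_eq_pow_smul J (LinearMap.ker g)
    refine ⟨c + s, fun P _ _ f hf ξ => ?_⟩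
    have hproj : Projective (g.shortComplexKer).X₂ :=
      inferInstanceAs (Projective (ModuleCat.of R (Fin n → R)))
    obtain ⟨y, rfl⟩ := precomp_extClass_surjective_of_projective_X₂ A
      (LinearMap.shortExact_shortComplexKer hg) j ξ
    -- pullback
    let W : Submodule R (P × (Fin n → R)) :=
      LinearMap.eqLocus (f ∘ₗ LinearMap.fst R P (Fin n → R)) (g ∘ₗ LinearMap.snd R P (Fin n → R)) ⊓
        (J ^ (c + s) • (⊤ : Submodule R (Fin n → R))).comap (LinearMap.snd R P (Fin n → R))
    let g' : W →ₗ[R] P := LinearMap.fst R P (Fin n → R) ∘ₗ W.subtype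
    let a : W →ₗ[R] (Fin n → R) := LinearMap.snd R P (Fin n → R) ∘ₗ W.subtype
    have hcomm : g ∘ₗ a = f ∘ₗ g' := by
      ext w
      exact w.2.1.symm
    have hg' : Function.Surjective g' := by
      intro p
      have h1 : J ^ (c + s) • (⊤ : Submodule R N) =
          (J ^ (c+s) • (⊤ : Submodule R (Fin n → R))).map g := by
        rw [Submodule.map_smul'', Submodule.map_top, LinearMap.range_eq_top.2 hg]
      have h2 := hf p
      rw [h1] at h2
      obtain ⟨v, hv, hv'⟩ := h2
      exact ⟨⟨(p, v), ⟨hv'.symm, hv⟩⟩, rfl⟩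
    refine key g g' a f hcomm hg hg' A j y ?_
    apply hs
    intro w
    have h3 : a w.1 ∈ J ^ (c+s) • (⊤ : Submodule R (Fin n → R)) ⊓ LinearMap.ker g :=
      ⟨w.1.2.2, (kerMap g g' a f hcomm w).2⟩
    rw [hc _ (by omega)] at h3
    have h4 : a w.1 ∈ J ^ s • LinearMap.ker g := by
      have := smul_mono_right (J ^ (c + s - c)) (inf_le_right :
        J ^ c • (⊤ : Submodule R (Fin n → R)) ⊓ LinearMap.ker g ≤ LinearMap.ker g) h3
      simpa using this
    have h5 : J ^ s • LinearMap.ker g =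
        (J ^ s • (⊤ : Submodule R (LinearMap.ker g))).map (LinearMap.ker g).subtype := by
      rw [Submodule.map_smul'', Submodule.map_top, Submodule.range_subtype]
    rw [h5] at h4
    obtain ⟨v, hv, hv'⟩ := h4
    have : kerMap g g' a f hcomm w = v := Subtype.ext hv'.symm
    rw [this]
    exact hv

lemma vanish [IsNoetherianRing R] (J : Ideal R) (k : ℕ) (A : ModuleCat.{u} R)
    (hA : ∀ r ∈ J ^ k, ∀ a : A, r • a = 0) (j : ℕ) (z : H J (j+1) A) : z = 0 := by
  obtain ⟨n, ξ, rfl⟩ := exists_of z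
  have hg : ∀ n, Function.Surjective (Submodule.mkQ (J ^ n)) := fun n => Submodule.mkQ_surjective _
  obtain ⟨t, ht⟩ := van_aux J k A hA j (LinearMap.ker (Submodule.mkQ (J ^ n)))
  have hproj : Projective ((Submodule.mkQ (J ^ n)).shortComplexKer).X₂ :=
      inferInstanceAs (Projective (ModuleCat.of R R))
  obtain ⟨y, rfl⟩ := precomp_extClass_surjective_of_projective_X₂ A
      (LinearMap.shortExact_shortComplexKer (hg n)) j ξ
  rw [← of_tr (Nat.le_add_right n t)]
  have : tr J (j+1) A n (n+t) (Nat.le_add_right n t)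
    ((LinearMap.shortExact_shortComplexKer (hg n)).extClass.precomp A (add_comm 1 j) y) = 0 := by
    refine key (Submodule.mkQ (J ^ n)) (Submodule.mkQ (J ^ (n+t))) LinearMap.id _ ?_ (hg n) (hg _)
      A j y ?_
    · ext; rfl
    · apply ht
      rintro ⟨w, hw⟩
      have hw' : w ∈ J ^ (n + t) := by simpa using hw
      have h5 : J ^ t • LinearMap.ker (J ^ n).mkQ =
        (J ^ t • (⊤ : Submodule R (LinearMap.ker (J ^ n).mkQ))).map
          (LinearMap.ker (J ^ n).mkQ).subtype := by
        rw [Submodule.map_smul'', Submodule.map_top, Submodule.range_subtype]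
      have h6 : w ∈ J ^ t • LinearMap.ker (J ^ n).mkQ := by
        rw [Submodule.ker_mkQ, smul_eq_mul, ← pow_add, add_comm]
        exact hw'
      rw [h5] at h6
      obtain ⟨v, hv, hv'⟩ := h6
      have e : ∀ h, kerMap (J ^ n).mkQ (J ^ (n+t)).mkQ LinearMap.id
          (Submodule.mapQ (J ^ (n + t)) (J ^ n) LinearMap.id
            (Ideal.pow_le_pow_right (Nat.le_add_right n t))) h ⟨w, hw⟩ = v :=
        fun h => Subtype.ext hv'.symm
      rw [e]
      exact hv
  erw [this]
  simp

end LC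

namespace LC
open CategoryTheory CategoryTheory.Abelian

section bridge
variable {R : Type u} [CommRing R]

lemma opA (K : ChainComplex (ModuleCat.{u} R)ᵒᵖ ℕ) (n : ℕ) (f : (K.X n).unop)
    (hf : (K.d (n+1) n).unop.hom f = 0) :
    ∃ c : (K.opcycles n).unop, (K.pOpcycles n).unop.hom c = f := by
  have h : (ShortComplex.mk (K.d (n+1) n) (K.pOpcycles n) (by simp)).Exact :=
    ShortComplex.exact_of_g_is_cokernel _ (K.opcyclesIsCokernel (n+1) n (by simp))
  exact (ShortComplex.moduleCat_exact_iff _).1 h.unop f hf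

lemma opB (K : ChainComplex (ModuleCat.{u} R)ᵒᵖ ℕ) (n n' : ℕ)
    (hn : (ComplexShape.down ℕ).next n = n') (c : (K.opcycles n).unop)
    (hf : (K.homologyι n).unop.hom c = 0) :
    ∃ g : (K.X n').unop, (K.d n n').unop.hom g = (K.pOpcycles n).unop.hom c := by
  have h : (ShortComplex.mk (K.homologyι n) (K.fromOpcycles n n') (by simp)).Exact :=
    ShortComplex.exact_of_f_is_kernel _ (K.homologyIsKernel n n' hn)
  obtain ⟨g, hg⟩ := (ShortComplex.moduleCat_exact_iff _).1 h.unop c hf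
  refine ⟨g, ?_⟩
  rw [← K.p_fromOpcycles]
  exact congrArg (K.pOpcycles n).unop.hom hg

lemma opB' (K : ChainComplex (ModuleCat.{u} R)ᵒᵖ ℕ) (n n' : ℕ)
    (c : (K.opcycles n).unop) (g : (K.X n').unop)
    (hg : (K.d n n').unop.hom g = (K.pOpcycles n).unop.hom c) :
    (K.homologyι n).unop.hom c = 0 := by
  have h1 : (K.fromOpcycles n n').unop.hom g = c := by
    have hinj : Function.Injective (K.pOpcycles n).unop.hom :=
      (ModuleCat.mono_iff_injective _).1 inferInstance
    apply hinj
    rw [← hg, ← K.p_fromOpcycles]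
    rfl
  rw [← h1]
  have h2 := K.homologyι_comp_fromOpcycles n n'
  have h3 := congrArg (fun t => t.unop.hom g) h2
  exact h3

variable {X Y : ModuleCat.{u} R} (P : ProjectiveResolution X)

/-- the Hom functor -/
noncomputable abbrev FY (Y : ModuleCat.{u} R) : ModuleCat.{u} R ⥤ (ModuleCat.{u} R)ᵒᵖ :=
  ((linearYoneda R (ModuleCat.{u} R)).obj Y).rightOp

/-- the Hom complex -/
noncomputable abbrev KP {X : ModuleCat.{u} R} (P : ProjectiveResolution X) (Y : ModuleCat.{u} R) :
    ChainComplex (ModuleCat.{u} R)ᵒᵖ ℕ :=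
  ((FY Y).mapHomologicalComplex _).obj P.complex

/-- old Ext -/
noncomputable abbrev oExt (X Y : ModuleCat.{u} R) (n : ℕ) : ModuleCat.{u} R :=
  ((_root_.Ext R (ModuleCat.{u} R) n).obj (Opposite.op X)).obj Y

/-- comparison iso -/
noncomputable def isoU (Y : ModuleCat.{u} R) (n : ℕ) :
    ((FY Y).leftDerived n).obj X ≅ (KP P Y).homology n := P.isoLeftDerivedObj (FY Y) n

/-- class map -/
noncomputable def cl (n : ℕ) : ((KP P Y).opcycles n).unop →ₗ[R] oExt X Y n :=
  ((isoU P Y n).hom.unop).hom ∘ₗ ((KP P Y).homologyι n).unop.hom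

/-- underlying cocycle -/
noncomputable def co (n : ℕ) : ((KP P Y).opcycles n).unop →ₗ[R] (P.complex.X n ⟶ Y) :=
  ((KP P Y).pOpcycles n).unop.hom

lemma cl_surj (n : ℕ) : Function.Surjective (cl P (Y := Y) n) := by
  have h1 : Function.Surjective ((isoU P Y n).hom.unop).hom :=
    (ModuleCat.epi_iff_surjective _).1 inferInstance
  have h2 : Function.Surjective ((KP P Y).homologyι n).unop.hom :=
    (ModuleCat.epi_iff_surjective _).1 inferInstance
  exact h1.comp h2

lemma co_cocycle (n : ℕ) (c) : P.complex.d (n+1) n ≫ co P (Y := Y) n c = 0 := by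
  have := (KP P Y).d_pOpcycles (n+1) n
  exact congrArg (fun t => t.unop.hom c) this

lemma co_surj (n : ℕ) (f : P.complex.X n ⟶ Y) (hf : P.complex.d (n+1) n ≫ f = 0) :
    ∃ c, co P (Y := Y) n c = f := opA (KP P Y) n f hf

lemma cl_eq_zero (n n' : ℕ) (hn : (ComplexShape.down ℕ).next n = n') (c) :
    cl P (Y := Y) n c = 0 ↔ ∃ g, P.complex.d n n' ≫ g = co P (Y := Y) n c := by
  have h1 : Function.Injective ((isoU P Y n).hom.unop).hom :=
    (ModuleCat.mono_iff_injective _).1 inferInstance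
  constructor
  · intro h
    have h2 : ((KP P Y).homologyι n).unop.hom c = 0 := by
      apply h1
      rw [_root_.map_zero]
      exact h
    exact opB (KP P Y) n n' hn c h2
  · rintro ⟨g, hg⟩
    have := opB' (KP P Y) n n' c g hg
    change ((isoU P Y n).hom.unop).hom (((KP P Y).homologyι n).unop.hom c) = 0
    rw [this, _root_.map_zero]

lemma nat_co {X' : ModuleCat.{u} R} (Q : ProjectiveResolution X') (g : X' ⟶ X)
    (φ : ProjectiveResolution.Hom Q P g) (n : ℕ) (c) :
    ∃ c', co Q (Y := Y) n c' = φ.hom.f n ≫ co P n c ∧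
      cl Q n c' = (((_root_.Ext R (ModuleCat.{u} R) n).map g.op).app Y).hom (cl P n c) := by
  let ψ : KP Q Y ⟶ KP P Y := ((FY Y).mapHomologicalComplex _).map φ.hom
  refine ⟨(HomologicalComplex.opcyclesMap ψ n).unop.hom c, ?_, ?_⟩
  · have := HomologicalComplex.p_opcyclesMap ψ n
    exact congrArg (fun t => t.unop.hom c) this
  · have h1 := ProjectiveResolution.isoLeftDerivedObj_hom_naturality g Q P φ.hom
      φ.hom_f_zero_comp_π_f_zero (FY Y) n
    have h2 := HomologicalComplex.homologyι_naturality ψ n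
    have h1' : ((FY Y).leftDerived n).map g ≫ (isoU P Y n).hom =
        (isoU Q Y n).hom ≫ HomologicalComplex.homologyMap ψ n := h1
    have h3 : ((FY Y).leftDerived n).map g ≫ (isoU P Y n).hom ≫ (KP P Y).homologyι n =
        (isoU Q Y n).hom ≫ (KP Q Y).homologyι n ≫ HomologicalComplex.opcyclesMap ψ n := by
      rw [← Category.assoc, h1', Category.assoc, h2]
    exact congrArg (fun t => t.unop.hom c) h3.symm

lemma extMk_zero_iff (n n' : ℕ) (hn : (ComplexShape.down ℕ).next n = n')
    (f : P.complex.X n ⟶ Y) (hf : P.complex.d (n+1) n ≫ f = 0) :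
    P.extMk f (n+1) rfl hf = 0 ↔ ∃ g, P.complex.d n n' ≫ g = f := by
  rcases n with _ | n
  · have hz : P.complex.d 0 n' = 0 := by
      apply P.complex.shape
      simp
    simp only [hz, Limits.zero_comp, exists_const_iff]
    constructor
    · intro h
      rw [← P.extEquivCohomologyClass.apply_eq_iff_eq,
        ProjectiveResolution.extEquivCohomologyClass_extMk,
        ProjectiveResolution.extEquivCohomologyClass_zero,
        CochainComplex.HomComplex.CohomologyClass.mk_eq_zero_iff] at h
      rw [CochainComplex.HomComplex.Cocycle.toSingleMk_mem_coboundaries_iff _ _ _ _ _ 1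
        (by simp)] at h
      obtain ⟨g, hg⟩ := h
      have hz : Limits.IsZero (P.cochainComplex.X 1) := by
        exact CochainComplex.isZero_of_isStrictlyLE _ 0 _ (by simp)
      have : g = 0 := hz.eq_of_src _ _
      rw [this] at hg
      refine ⟨⟨0⟩, ?_⟩
      rw [← cancel_epi (P.cochainComplexXIso (-(0:ℕ)) 0 rfl).hom, ← hg]
      simp
    · rintro ⟨_, rfl⟩
      simp
  · have : n' = n := by rw [← hn]; simp
    subst this
    exact P.extMk_eq_zero_iff f _ rfl hf n' rfl

lemma smul_extMk (n : ℕ) (r : R)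
    (f : P.complex.X n ⟶ Y) (hf : P.complex.d (n+1) n ≫ f = 0) :
    r • P.extMk f (n+1) rfl hf = P.extMk (r • f) (n+1) rfl (by simp [hf]) := by
  rw [Ext.smul_eq_comp_mk₀, ProjectiveResolution.extMk_comp_mk₀]
  congr 1

lemma cl_zero_iff_extMk (n : ℕ) (c) :
    cl P (Y := Y) n c = 0 ↔ P.extMk (co P n c) (n+1) rfl (co_cocycle P n c) = 0 := by
  rw [cl_eq_zero P n _ rfl, extMk_zero_iff P n _ rfl]

/-- lifting -/
noncomputable def liftHom {X' : ModuleCat.{u} R} (Q : ProjectiveResolution X') (g : X' ⟶ X) :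
    ProjectiveResolution.Hom Q P g :=
  ⟨ProjectiveResolution.lift g Q P, by
    rw [ProjectiveResolution.lift_commutes_zero]; rfl⟩

/-- killing after restriction agrees -/
lemma old_new {X' : ModuleCat.{u} R} (Q : ProjectiveResolution X') (g : X' ⟶ X) (n : ℕ) (r : R)
    (c) : r • (((_root_.Ext R (ModuleCat.{u} R) n).map g.op).app Y).hom (cl P n c) = 0 ↔
      r • (Ext.mk₀ g).comp (P.extMk (co P n c) (n+1) rfl (co_cocycle P n c)) (zero_add n) = 0 := by
  obtain ⟨c', h1, h2⟩ := nat_co (Y := Y) P Q g (liftHom P Q g) n c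
  rw [← h2, ← LinearMap.map_smul, cl_zero_iff_extMk,
    ProjectiveResolution.mk₀_comp_extMk _ _ _ _ (liftHom P Q g), smul_extMk]
  simp only [LinearMap.map_smul, h1]

lemma old_new_iff (J : Ideal R) (j : ℕ) (M : ModuleCat.{u} R) (r : R) :
    (∀ n (ξ : oExt (LC.X J n) M j), ∃ n', ∃ h : n ≤ n',
      r • (((_root_.Ext R (ModuleCat.{u} R) j).map (res J h).op).app M).hom ξ = 0) ↔
    ∀ z : H J j M, r • z = 0 := by
  constructor
  · intro h z
    obtain ⟨n, x, rfl⟩ := exists_of z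
    let P := projectiveResolution (LC.X J n)
    obtain ⟨f, hf, rfl⟩ := P.extMk_surjective x _ rfl
    obtain ⟨c, rfl⟩ := co_surj P j f hf
    obtain ⟨n', hn, h1⟩ := h n (cl P j c)
    rw [old_new P (projectiveResolution (LC.X J n'))] at h1
    rw [← of_tr hn, tr_apply, ← LinearMap.map_smul, h1, _root_.map_zero]
  · intro h n ξ
    let P := projectiveResolution (LC.X J n)
    obtain ⟨c, rfl⟩ := cl_surj P j ξ
    have h1 := h (of J j M n (P.extMk (co P j c) (j+1) rfl (co_cocycle P j c)))
    rw [← LinearMap.map_smul] at h1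
    obtain ⟨n', hn, h2⟩ := of_zero_exact _ h1
    refine ⟨n', hn, ?_⟩
    rw [old_new P (projectiveResolution (LC.X J n')), ← tr_apply, ← LinearMap.map_smul, h2]

lemma bridge (J : Ideal R) (j : ℕ) (M : ModuleCat.{u} R) (r : R) :
    (∀ m : (localCohomology J j).obj M, r • m = 0) ↔ ∀ z : H J j M, r • z = 0 := by
  rw [← old_new_iff]
  let G := localCohomology.diagram (localCohomology.idealPowersDiagram J) j
  have : Limits.PreservesFilteredColimitsOfSize.{0, 0} (forget (ModuleCat.{u} R)) :=
    Limits.preservesSmallestFilteredColimits_of_preservesFilteredColimits.{u,u} (forget (ModuleCat.{u} R))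
  have : Limits.HasColimit G := localCohomology.hasColimitDiagram.{u, 0} _ _
  let E := (evaluation (ModuleCat.{u} R) (ModuleCat.{u} R)).obj M
  have hc : Limits.IsColimit (E.mapCocone (Limits.colimit.cocone G)) :=
    Limits.isColimitOfPreserves E (Limits.colimit.isColimit G)
  have hpt : (localCohomology J j).obj M = (E.mapCocone (Limits.colimit.cocone G)).pt := rfl
  constructor
  · intro h n ξ
    let ξ' : (G ⋙ E).obj (Opposite.op (Opposite.op n)) := ξ
    let ι := (E.mapCocone (Limits.colimit.cocone G)).ι
    have h1 : (ι.app (Opposite.op (Opposite.op n))).hom (r • ξ') =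
        (ι.app (Opposite.op (Opposite.op n))).hom 0 := by
      rw [LinearMap.map_smul, _root_.map_zero]
      exact h _
    obtain ⟨k, f, g, hfg⟩ := (Limits.Concrete.isColimit_rep_eq_iff_exists _ hc _ _).1 h1
    refine ⟨k.unop.unop, f.unop.unop.down.down, ?_⟩
    rw [← LinearMap.map_smul]
    refine Eq.trans ?_ (hfg.trans ?_)
    · rfl
    · exact _root_.map_zero ((G ⋙ E).map g).hom
  · intro h m
    obtain ⟨k, ξ, rfl⟩ := Limits.Concrete.isColimit_exists_rep _ hc m
    obtain ⟨n', hn, h1⟩ := h k.unop.unop ξ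
    let f : k ⟶ Opposite.op (Opposite.op n') := (homOfLE hn).op.op
    have h2 := (E.mapCocone (Limits.colimit.cocone G)).w f
    let ι := (E.mapCocone (Limits.colimit.cocone G)).ι
    have h3 : (ι.app k).hom ξ = (ι.app _).hom (((G ⋙ E).map f).hom ξ) := 
      congrArg (fun t => t.hom ξ) h2.symm
    change r • (ι.app k).hom ξ = (0 : (E.mapCocone (Limits.colimit.cocone G)).pt)
    rw [h3, ← LinearMap.map_smul]
    have h4 : r • (((G ⋙ E).map f).hom ξ) = 0 := h1
    rw [h4, _root_.map_zero]

end bridge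
end LC

namespace LC
open CategoryTheory CategoryTheory.Abelian

section ideals
variable {R : Type u} [CommRing R]

/-- the module `R/I` -/
noncomputable abbrev Q (I : Ideal R) : ModuleCat.{u} R := ModuleCat.of R (R ⧸ I)

/-- `r` kills the `j`-th local cohomology of `R/I` -/
def Kill (J : Ideal R) (r : R) (j : ℕ) (I : Ideal R) : Prop := ∀ z : H J j (Q I), r • z = 0

/-- saturation -/
def sat (J I : Ideal R) : Ideal R where
  carrier := {a | ∃ n, ∀ s ∈ J ^ n, s * a ∈ I}
  zero_mem' := ⟨0, fun s _ => by simp⟩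
  add_mem' := by
    rintro a b ⟨n, hn⟩ ⟨m, hm⟩
    refine ⟨n + m, fun s hs => ?_⟩
    rw [mul_add]
    exact I.add_mem (hn s (Ideal.pow_le_pow_right (by omega) hs))
      (hm s (Ideal.pow_le_pow_right (by omega) hs))
  smul_mem' := by
    rintro c a ⟨n, hn⟩
    refine ⟨n, fun s hs => ?_⟩
    have := I.mul_mem_left c (hn s hs)
    rw [smul_eq_mul]
    convert this using 1
    ring

lemma mem_sat {J I : Ideal R} {a : R} : a ∈ sat J I ↔ ∃ n, ∀ s ∈ J ^ n, s * a ∈ I := Iff.rfl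

lemma le_sat (J I : Ideal R) : I ≤ sat J I := fun _ ha => ⟨0, fun s _ => I.mul_mem_left s ha⟩

lemma sat_unif [IsNoetherianRing R] (J I K : Ideal R) (h : K ≤ sat J I) :
    ∃ n, ∀ s ∈ J ^ n, ∀ a ∈ K, s * a ∈ I := by
  obtain ⟨t, ht⟩ := (isNoetherianRing_iff_ideal_fg R).1 inferInstance K
  have h1 : ∀ a : R, ∃ n, a ∈ K → ∀ s ∈ J ^ n, s * a ∈ I := by
    intro a
    by_cases ha : a ∈ K
    · obtain ⟨n, hn⟩ := h ha
      exact ⟨n, fun _ => hn⟩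
    · exact ⟨0, fun h => absurd h ha⟩
  choose f hf using h1
  refine ⟨t.sup f, fun s hs a ha => ?_⟩
  rw [← ht] at ha
  refine Submodule.span_induction (p := fun a _ => s * a ∈ I) ?_ ?_ ?_ ?_ ha
  · intro b hb
    refine hf b (ht ▸ Ideal.subset_span hb) s (Ideal.pow_le_pow_right (Finset.le_sup hb) hs)
  · simp
  · intro b c _ _ hb hc
    rw [mul_add]; exact I.add_mem hb hc
  · intro c b _ hb
    rw [smul_eq_mul, mul_left_comm]
    exact I.mul_mem_left _ hb

/-- projection `R/I → R/K` -/
noncomputable def pr {I K : Ideal R} (h : I ≤ K) : Q I ⟶ Q K :=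
  ModuleCat.ofHom (Submodule.mapQ I K LinearMap.id h)

lemma pr_surj {I K : Ideal R} (h : I ≤ K) :
    Function.Surjective (Submodule.mapQ I K LinearMap.id h) := by
  intro a
  obtain ⟨a, rfl⟩ := Submodule.mkQ_surjective _ a
  exact ⟨Submodule.Quotient.mk a, rfl⟩

lemma pr_ker [IsNoetherianRing R] (J : Ideal R) {I K : Ideal R} (h : I ≤ K) (hK : K ≤ sat J I) :
    ∃ n, ∀ s ∈ J ^ n, ∀ a : ModuleCat.of R (LinearMap.ker (Submodule.mapQ I K LinearMap.id h)),
      s • a = 0 := by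
  obtain ⟨n, hn⟩ := sat_unif J I K hK
  refine ⟨n, ?_⟩
  rintro s hs ⟨a, ha⟩
  apply Subtype.ext
  obtain ⟨a, rfl⟩ := Submodule.mkQ_surjective _ a
  change s • (Submodule.Quotient.mk a : R ⧸ I) = 0
  rw [← Submodule.Quotient.mk_smul, Submodule.Quotient.mk_eq_zero]
  apply hn s hs
  rw [LinearMap.mem_ker] at ha
  exact (Submodule.Quotient.mk_eq_zero K).1 ha

lemma pr_map_surj [IsNoetherianRing R] (J : Ideal R) {I K : Ideal R} (h : I ≤ K)
    (hK : K ≤ sat J I) (j : ℕ) (z : H J j (Q K)) : ∃ w, map J j (pr h) w = z := by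
  obtain ⟨n, hn⟩ := pr_ker J h hK
  exact exact₃ J (LinearMap.shortExact_shortComplexKer (pr_surj h)) j z (vanish J n _ hn j _)

lemma pr_map_inj [IsNoetherianRing R] (J : Ideal R) {I K : Ideal R} (h : I ≤ K)
    (hK : K ≤ sat J I) (j : ℕ) (z : H J (j+1) (Q I)) (hz : map J (j+1) (pr h) z = 0) : z = 0 := by
  obtain ⟨n, hn⟩ := pr_ker J h hK
  obtain ⟨w, rfl⟩ := exact₂ J (LinearMap.shortExact_shortComplexKer (pr_surj h)) (j+1) z hz
  rw [vanish J n _ hn j w, _root_.map_zero]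

lemma Kill.of_sat [IsNoetherianRing R] {J : Ideal R} {I K : Ideal R} (h : I ≤ K)
    (hK : K ≤ sat J I) {j : ℕ} {r : R} (hr : Kill J r j I) : Kill J r j K := by
  intro z
  obtain ⟨w, rfl⟩ := pr_map_surj J h hK j z
  rw [← LinearMap.map_smul, hr w, _root_.map_zero]

lemma Kill.mul_left {J I : Ideal R} {j : ℕ} {r : R} (s : R) (hr : Kill J r j I) :
    Kill J (s * r) j I := by
  intro z
  rw [mul_smul, hr z, smul_zero]

lemma Kill.add {J I : Ideal R} {j : ℕ} {r s : R} (hr : Kill J r j I) (hs : Kill J s j I) :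
    Kill J (r + s) j I := by
  intro z
  rw [add_smul, hr z, hs z, add_zero]

lemma Kill.of_mem {J I : Ideal R} {j : ℕ} {r : R} (hr : r ∈ I) : Kill J r j I := by
  intro z
  apply smul_eq_zero_of_ann
  intro a
  obtain ⟨a, rfl⟩ := Submodule.mkQ_surjective _ a
  change r • (Submodule.Quotient.mk a : R ⧸ I) = 0
  rw [← Submodule.Quotient.mk_smul, Submodule.Quotient.mk_eq_zero]
  exact I.mul_mem_right _ hr

/-- the ideal of killers -/
def killer (J : Ideal R) (j : ℕ) (I : Ideal R) : Ideal R where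
  carrier := {r | Kill J r j I}
  zero_mem' := fun z => zero_smul _ z
  add_mem' := Kill.add
  smul_mem' := fun c _ h => h.mul_left c

lemma kill_zero {J I : Ideal R} {r : R} : Kill J r 0 I ↔ ∀ a ∈ sat J I, r * a ∈ I := by
  rw [Kill, kill_zero_iff]
  have e : ∀ (s a : R), s • (Submodule.Quotient.mk a : R ⧸ I) = 0 ↔ s * a ∈ I := by
    intro s a
    rw [← Submodule.Quotient.mk_smul, Submodule.Quotient.mk_eq_zero, smul_eq_mul]
  constructor
  · rintro h a ⟨n, hn⟩
    exact (e r a).1 (h (Submodule.Quotient.mk a) ⟨n, fun s hs => (e s a).2 (hn s hs)⟩)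
  · intro h a
    obtain ⟨a, rfl⟩ := Submodule.mkQ_surjective _ a
    rintro ⟨n, hn⟩
    exact (e r a).2 (h a ⟨n, fun s hs => (e s a).1 (hn s hs)⟩)

/-- multiplication by x -/
noncomputable def mf (I C : Ideal R) (x : R) (hC : ∀ a, a ∈ C ↔ x * a ∈ I) : Q C ⟶ Q I :=
  ModuleCat.ofHom (Submodule.mapQ C I (LinearMap.mulLeft R x) (fun a ha => (hC a).1 ha))

/-- projection -/
noncomputable def pg (I : Ideal R) (x : R) : Q I ⟶ Q (I ⊔ Ideal.span {x}) := pr le_sup_left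

/-- the short complex `R/C → R/I → R/(I+x)` -/
noncomputable def sc (I C : Ideal R) (x : R) (hC : ∀ a, a ∈ C ↔ x * a ∈ I) :
    ShortComplex (ModuleCat.{u} R) where
  X₁ := Q C
  X₂ := Q I
  X₃ := Q (I ⊔ Ideal.span {x})
  f := mf I C x hC
  g := pg I x
  zero := by
    apply ModuleCat.hom_ext
    apply Submodule.linearMap_qext
    ext
    change (Submodule.Quotient.mk (x * 1) : R ⧸ (I ⊔ Ideal.span {x})) = 0
    rw [Submodule.Quotient.mk_eq_zero, mul_one]
    exact Ideal.mem_sup_right (Ideal.mem_span_singleton_self x)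

lemma sc_exact (I C : Ideal R) (x : R) (hC : ∀ a, a ∈ C ↔ x * a ∈ I) :
    (sc I C x hC).ShortExact := by
  have hmono : Mono (sc I C x hC).f := by
    rw [ModuleCat.mono_iff_injective]
    rw [injective_iff_map_eq_zero]
    intro a ha
    obtain ⟨a, rfl⟩ := Submodule.mkQ_surjective _ a
    refine (Submodule.Quotient.mk_eq_zero C).2 ?_
    exact (hC a).2 ((Submodule.Quotient.mk_eq_zero I).1 ha)
  have hepi : Epi (sc I C x hC).g := by
    rw [ModuleCat.epi_iff_surjective]
    exact pr_surj (le_sup_left : I ≤ I ⊔ Ideal.span {x})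
  refine ⟨?_⟩
  rw [ShortComplex.moduleCat_exact_iff]
  intro a ha
  obtain ⟨a, rfl⟩ := Submodule.mkQ_surjective _ a
  have h1 : a ∈ I ⊔ Ideal.span {x} := (Submodule.Quotient.mk_eq_zero _).1 ha
  obtain ⟨b, hb, c, hc, rfl⟩ := Submodule.mem_sup.1 h1
  obtain ⟨c, rfl⟩ := Ideal.mem_span_singleton'.1 hc
  refine ⟨(Submodule.Quotient.mk c : R ⧸ C), ?_⟩
  refine (Submodule.Quotient.eq I).2 ?_
  have : (LinearMap.mulLeft R x) c - (b + c * x) = - b := by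
    simp only [LinearMap.mulLeft_apply]; ring
  rw [this]
  exact I.neg_mem hb


variable {I C : Ideal R} {x : R}

/-- connecting map -/
noncomputable def del (J : Ideal R) (hC : ∀ a, a ∈ C ↔ x * a ∈ I) (j : ℕ) :
    H J j (Q (I ⊔ Ideal.span {x})) →ₗ[R] H J (j+1) (Q C) := δ J (sc_exact I C x hC) j

lemma ex₁ (J : Ideal R) (hC : ∀ a, a ∈ C ↔ x * a ∈ I) (j : ℕ) (z : H J (j+1) (Q C))
    (hz : map J (j+1) (mf I C x hC) z = 0) : ∃ w, del J hC j w = z :=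
  exact₁ J (sc_exact I C x hC) j z hz

lemma ex₂ (J : Ideal R) (hC : ∀ a, a ∈ C ↔ x * a ∈ I) (j : ℕ) (z : H J j (Q I))
    (hz : map J j (pg I x) z = 0) : ∃ w, map J j (mf I C x hC) w = z :=
  exact₂ J (sc_exact I C x hC) j z hz

lemma ex₃ (J : Ideal R) (hC : ∀ a, a ∈ C ↔ x * a ∈ I) (j : ℕ)
    (z : H J j (Q (I ⊔ Ideal.span {x})))
    (hz : del J hC j z = 0) : ∃ w, map J j (pg I x) w = z :=
  exact₃ J (sc_exact I C x hC) j z hz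

lemma le_C (hC : ∀ a, a ∈ C ↔ x * a ∈ I) : I ≤ C := fun a ha => (hC a).2 (I.mul_mem_left _ ha)

lemma pr_f (hC : ∀ a, a ∈ C ↔ x * a ∈ I) : pr (le_C hC) ≫ mf I C x hC = x • 𝟙 (Q I) := by
  apply ModuleCat.hom_ext
  apply Submodule.linearMap_qext
  ext
  rfl

lemma f_pr (J : Ideal R) (hC : ∀ a, a ∈ C ↔ x * a ∈ I) (j : ℕ) (z : H J j (Q I)) :
    map J j (mf I C x hC) (map J j (pr (le_C hC)) z) = x • z := by
  rw [← map_comp, pr_f, map_smul_id]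

lemma E1 [IsNoetherianRing R] {J : Ideal R} (hC : ∀ a, a ∈ C ↔ x * a ∈ I) (hs : C ≤ sat J I)
    {j : ℕ} (h : H J j (Q I)) (hh : map J j (pg I x) h = 0) :
    ∃ h', h = x • h' := by
  obtain ⟨w, rfl⟩ := ex₂ J hC j h hh
  obtain ⟨w, rfl⟩ := pr_map_surj J (le_C hC) hs j w
  exact ⟨w, f_pr J hC j w⟩

lemma E2 [IsNoetherianRing R] {J : Ideal R} (hC : ∀ a, a ∈ C ↔ x * a ∈ I) (hs : C ≤ sat J I)
    {j : ℕ} {r : R} (hr : Kill J r (j+1) I) (ξ : H J j (Q (I ⊔ Ideal.span {x}))) :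
    ∃ h, map J j (pg I x) h = r • ξ := by
  apply ex₃ J hC
  obtain ⟨w, hw⟩ := pr_map_surj J (le_C hC) hs _ (del J hC j ξ)
  rw [LinearMap.map_smul, ← hw, ← LinearMap.map_smul, hr w, _root_.map_zero]

lemma E3 [IsNoetherianRing R] {J : Ideal R} (hC : ∀ a, a ∈ C ↔ x * a ∈ I) (hs : C ≤ sat J I)
    {j : ℕ} {r : R} (hr : Kill J r j (I ⊔ Ideal.span {x})) (ξ : H J (j+1) (Q I))
    (hξ : x • ξ = 0) : r • ξ = 0 := by
  rw [← f_pr J hC] at hξ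
  obtain ⟨w, hw⟩ := ex₁ J hC j _ hξ
  apply pr_map_inj J (le_C hC) hs
  rw [LinearMap.map_smul, ← hw, ← LinearMap.map_smul, hr w, _root_.map_zero]

/-- comparison map -/
noncomputable def um (I : Ideal R) (x : R) (a : ℕ) :
    Q (I ⊔ Ideal.span {x}) ⟶ Q (I ⊔ Ideal.span {x ^ (a+1)}) :=
  ModuleCat.ofHom <| Submodule.mapQ _ _ (LinearMap.mulLeft R (x ^ a)) (by
      rw [sup_le_iff]
      constructor
      · intro b hb
        exact Ideal.mem_sup_left (I.mul_mem_left _ hb)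
      · rw [Ideal.span_le, Set.singleton_subset_iff]
        change x ^ a * x ∈ I ⊔ Ideal.span {x ^ (a+1)}
        rw [← pow_succ]
        exact Ideal.mem_sup_right (Ideal.mem_span_singleton_self _))

lemma del_nat (J : Ideal R) (hC : ∀ a, a ∈ C ↔ x * a ∈ I)
    {a : ℕ} (hCa : ∀ b, b ∈ C ↔ x ^ (a+1) * b ∈ I) (j : ℕ) (v) :
    del J hCa j (map J j (um I x a) v) = del J hC j v := by
  let φ : sc I C x hC ⟶ sc I C (x ^ (a+1)) hCa :=
    { τ₁ := 𝟙 (Q C)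
      τ₂ := (x ^ a) • 𝟙 (Q I)
      τ₃ := um I x a
      comm₁₂ := by
        apply ModuleCat.hom_ext
        apply Submodule.linearMap_qext
        ext
        change (Submodule.Quotient.mk (x ^ (a+1) * 1) : R ⧸ I) =
          x ^ a • Submodule.Quotient.mk (x * 1)
        rw [← Submodule.Quotient.mk_smul, smul_eq_mul, pow_succ]
        congr 1
        ring
      comm₂₃ := by
        apply ModuleCat.hom_ext
        apply Submodule.linearMap_qext
        ext
        rfl }
  refine (δ_nat J (sc_exact I C x hC) (sc_exact I C (x ^ (a+1)) hCa) φ j v).trans ?_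
  have h3 := map_smul_id J (j+1) (1 : R) (del J hC j v)
  rw [one_smul, one_smul] at h3
  exact h3

lemma E4 [IsNoetherianRing R] {J : Ideal R} (hC : ∀ a, a ∈ C ↔ x * a ∈ I) (hs : C ≤ sat J I)
    {a : ℕ} (hCa : ∀ b, b ∈ C ↔ x ^ (a+1) * b ∈ I)
    {j : ℕ} {r : R} (hx : Kill J x (j+1) I) (hr : Kill J r j I)
    (hr' : Kill J r j (I ⊔ Ideal.span {x})) : Kill J r j (I ⊔ Ideal.span {x ^ (a+1)}) := by
  intro ξ
  obtain ⟨w, hw⟩ := pr_map_surj J (le_C hC) hs _ (del J hCa j ξ)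
  have h1 : map J (j+1) (mf I C x hC) (del J hCa j ξ) = 0 := by
    rw [← hw, f_pr J hC, hx w]
  obtain ⟨v, hv⟩ := ex₁ J hC j _ h1
  have h2 : del J hCa j (ξ - map J j (um I x a) v) = 0 := by
    rw [map_sub, del_nat J hC hCa, hv, sub_self]
  obtain ⟨h, hh⟩ := ex₃ J hCa j _ h2
  have h3 : ξ = map J j (um I x a) v + map J j (pg I (x ^ (a+1))) h := by
    rw [hh, add_sub_cancel]
  rw [h3, smul_add, ← LinearMap.map_smul, ← LinearMap.map_smul, hr' v, hr h, _root_.map_zero,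
    _root_.map_zero, add_zero]

end ideals
end LC

namespace LC
open CategoryTheory CategoryTheory.Abelian

section FR
variable {R : Type u} [CommRing R]

lemma sat_sat [IsNoetherianRing R] (J I : Ideal R) : sat J (sat J I) ≤ sat J I := by
  rintro a ⟨n, hn⟩
  obtain ⟨m, hm⟩ := sat_unif J I (sat J I) le_rfl
  refine ⟨m + n, fun s hs => ?_⟩
  rw [pow_add] at hs
  refine Submodule.mul_induction_on hs ?_ ?_
  · intro p hp q hq
    rw [mul_assoc]
    exact hm p hp _ (hn q hq)
  · intro p q hp hq
    rw [add_mul]; exact I.add_mem hp hq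

lemma mk_smul_eq_zero {I : Ideal R} (s a : R) :
    s • (Submodule.Quotient.mk a : R ⧸ I) = 0 ↔ s * a ∈ I := by
  rw [← Submodule.Quotient.mk_smul, Submodule.Quotient.mk_eq_zero, smul_eq_mul]

variable [IsLocalRing R] [IsNoetherianRing R]

lemma exists_reg (J : Ideal R) (hJ : sat (maximalIdeal R) J ≤ J) :
    ∃ z ∈ maximalIdeal R, IsSMulRegular (R ⧸ J) z := by
  have : Subsingleton ((R ⧸ maximalIdeal R) →ₗ[R] (R ⧸ J)) := by
    refine ⟨fun f g => ?_⟩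
    have key : ∀ f : (R ⧸ maximalIdeal R) →ₗ[R] (R ⧸ J), f = 0 := by
      intro f
      apply LinearMap.ext
      intro a
      obtain ⟨a, rfl⟩ := Submodule.mkQ_surjective _ a
      obtain ⟨v, hv⟩ := Submodule.mkQ_surjective _ (f (Submodule.mkQ _ a))
      rw [LinearMap.zero_apply, ← hv]
      refine (Submodule.Quotient.mk_eq_zero J).2 (hJ ⟨1, fun s hs => ?_⟩)
      rw [pow_one] at hs
      rw [← mk_smul_eq_zero]
      change s • (J.mkQ v) = 0
      rw [hv, ← LinearMap.map_smul]
      have : s • ((maximalIdeal R).mkQ a) = 0 :=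
        (mk_smul_eq_zero s a).2 (Ideal.mul_mem_right _ _ hs)
      rw [this, _root_.map_zero]
    rw [key f, key g]
  obtain ⟨r, hr, h⟩ := IsSMulRegular.subsingleton_linearMap_iff.1 this
  rw [Ideal.annihilator_quotient] at hr
  exact ⟨r, hr, h⟩

lemma dim_step {n : ℕ} (J A : Ideal R) (z : R) (hz : IsSMulRegular (R ⧸ J) z)
    (hA : ringKrullDim (R ⧸ A) < (n + 1 : ℕ)) (b : R) (hb : ∀ a ∈ A, a * b ∈ J) :
    ∃ A₂ : Ideal R, ringKrullDim (R ⧸ A₂) < n ∧ ∀ a ∈ A₂, a * b ∈ J ⊔ Ideal.span {z} := by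
  let X := Submodule.torsionBySet R (R ⧸ J) A
  have hX : IsSMulRegular X z := hz.submodule X z
  have h1 := Module.supportDim_quotSMulTop_succ_le_of_notMem_minimalPrimes (R := R) (M := X) (x := z)
    (fun _ => hX.notMem_of_mem_minimalPrimes)
  have h2 : Module.supportDim R X ≤ ringKrullDim (R ⧸ A) := by
    rw [Module.supportDim_eq_ringKrullDim_quotient_annihilator]
    have hle : A ≤ Module.annihilator R X := by
      intro a ha
      rw [Module.mem_annihilator]
      rintro ⟨m, hm⟩
      apply Subtype.ext
      exact (Submodule.mem_torsionBySet_iff _ _).1 hm ⟨a, ha⟩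
    exact ringKrullDim_le_of_surjective (Ideal.Quotient.factor hle)
      (Ideal.Quotient.factor_surjective hle)
  refine ⟨Module.annihilator R (QuotSMulTop z X), ?_, ?_⟩
  · rw [← Module.supportDim_eq_ringKrullDim_quotient_annihilator]
    have h3 := (h1.trans h2).trans_lt hA
    rw [Nat.cast_add, Nat.cast_one] at h3
    exact lt_of_add_lt_add_right h3
  · intro a ha
    rw [Module.mem_annihilator] at ha
    have hbX : (Submodule.Quotient.mk b : R ⧸ J) ∈ X := by
      rw [Submodule.mem_torsionBySet_iff]
      rintro ⟨a, ha⟩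
      exact (mk_smul_eq_zero a b).2 (hb a ha)
    have h4 := ha (Submodule.Quotient.mk ⟨_, hbX⟩)
    rw [← Submodule.Quotient.mk_smul, Submodule.Quotient.mk_eq_zero] at h4
    rw [Submodule.mem_smul_pointwise_iff_exists] at h4
    obtain ⟨⟨w, hw⟩, -, h5⟩ := h4
    have h6 := congrArg Subtype.val h5
    obtain ⟨w, rfl⟩ := Submodule.mkQ_surjective _ w
    change z • (Submodule.Quotient.mk w : R ⧸ J) = a • Submodule.Quotient.mk b at h6
    rw [← Submodule.Quotient.mk_smul, ← Submodule.Quotient.mk_smul, eq_comm,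
      Submodule.Quotient.eq] at h6
    have : a * b = (a • b - z • w) + z * w := by simp
    rw [this]
    exact Ideal.add_mem _ (Ideal.mem_sup_left h6)
      (Ideal.mem_sup_right (Ideal.mul_mem_right _ _ (Ideal.mem_span_singleton_self z)))

lemma krull (J : Ideal R) (z : R) (hz : z ∈ maximalIdeal R) (b : R)
    (hb : ∀ a : ℕ, b ∈ J ⊔ Ideal.span {z ^ a}) : b ∈ J := by
  have h1 := Ideal.iInf_pow_smul_eq_bot_of_isLocalRing (I := Ideal.span {z}) (M := R ⧸ J) (by
    intro h
    have : Ideal.span {z} ≤ maximalIdeal R := (Ideal.span_singleton_le_iff_mem _).2 hz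
    rw [h, top_le_iff] at this
    exact (Ideal.IsPrime.ne_top inferInstance) this)
  rw [← Submodule.Quotient.mk_eq_zero, ← Submodule.mem_bot R, ← h1, Submodule.mem_iInf]
  intro a
  obtain ⟨p, hp, q, hq, h⟩ := Submodule.mem_sup.1 (hb a)
  obtain ⟨c, rfl⟩ := Ideal.mem_span_singleton.1 hq
  have : (Submodule.Quotient.mk b : R ⧸ J) = z ^ a • Submodule.Quotient.mk c := by
    rw [← Submodule.Quotient.mk_smul, Submodule.Quotient.eq, ← h]
    simpa using hp
  rw [this]
  exact Submodule.smul_mem_smul (Ideal.pow_mem_pow (Ideal.mem_span_singleton_self z) a) trivial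

lemma FRC (n : ℕ) : ∀ (I A C : Ideal R), (∃ k, maximalIdeal R ^ k ≤ C) →
    (∀ j < n, ∀ c ∈ C, Kill (maximalIdeal R) c j I) → ringKrullDim (R ⧸ A) < n →
    ∀ b, (∀ a ∈ A, a * b ∈ I) → b ∈ sat (maximalIdeal R) I := by
  have top : ∀ A : Ideal R, ringKrullDim (R ⧸ A) < (0 : ℕ) → (1 : R) ∈ A := by
    intro A h
    by_contra h1
    have : Nontrivial (R ⧸ A) := Ideal.Quotient.nontrivial_iff.2 (fun h => h1 (h ▸ trivial))
    exact absurd (ringKrullDim_nonneg_of_nontrivial (R := R ⧸ A)) (not_le.2 (by simpa using h))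
  induction n with
  | zero =>
    intro I A C _ _ hA b hb
    have := hb 1 (top A hA)
    rw [one_mul] at this
    exact le_sat _ _ this
  | succ n ih =>
    intro I A C hC hK hA b hb
    set J := sat (maximalIdeal R) I with hJdef
    have hss : sat (maximalIdeal R) J ≤ J := sat_sat _ _
    have hKJ : ∀ j < n + 1, ∀ c ∈ C, Kill (maximalIdeal R) c j J :=
      fun j hj c hc => (hK j hj c hc).of_sat (le_sat _ _) le_rfl
    have h0 : Kill (maximalIdeal R) (1 : R) 0 J := kill_zero.2 (fun a ha => by
      rw [one_mul]; exact hss ha)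
    obtain ⟨z, hz, hreg⟩ := exists_reg J hss
    suffices hsuf : ∀ c ∈ C, c * b ∈ J by
      obtain ⟨k, hk⟩ := hC
      exact hss ⟨k, fun s hs => hsuf s (hk hs)⟩
    intro c hc
    apply krull J z hz
    intro a
    have hrega : IsSMulRegular (R ⧸ J) (z ^ a) := hreg.pow a
    have hCJ : ∀ a', a' ∈ J ↔ z ^ a * a' ∈ J := by
      intro a'
      refine ⟨fun h => J.mul_mem_left _ h, fun h => ?_⟩
      rw [← mk_smul_eq_zero] at h
      rw [← Submodule.Quotient.mk_eq_zero]
      exact hrega.right_eq_zero_of_smul h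
    obtain ⟨A₂, hA₂, hb₂⟩ := dim_step J A (z ^ a) hrega hA b (fun a ha => le_sat _ _ (hb a ha))
    rcases Nat.eq_zero_or_pos n with hn | hn
    · subst hn
      have := hb₂ 1 (top A₂ hA₂)
      rw [one_mul] at this
      exact Ideal.mul_mem_left _ _ this
    · have hbs : b ∈ sat (maximalIdeal R) (J ⊔ Ideal.span {z ^ a}) := by
        refine ih _ A₂ (C * C) ?_ ?_ hA₂ b hb₂
        · obtain ⟨k, hk⟩ := hC
          exact ⟨k + k, by rw [pow_add]; exact Ideal.mul_mono hk hk⟩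
        · intro j hj
          suffices h : C * C ≤ killer (maximalIdeal R) j (J ⊔ Ideal.span {z ^ a}) from
            fun c hc => h hc
          rw [Ideal.mul_le]
          intro r hr s hs ξ
          obtain ⟨h, hh⟩ := E2 hCJ (le_sat _ _) (hKJ (j + 1) (by omega) s hs) ξ
          rw [mul_smul, ← hh, ← LinearMap.map_smul, hKJ j (by omega) r hr, _root_.map_zero]
      have hk0 : Kill (maximalIdeal R) c 0 (J ⊔ Ideal.span {z ^ a}) := by
        intro ξ
        obtain ⟨h, hh⟩ := E2 hCJ (le_sat _ _) (hKJ 1 (by omega) c hc) ξ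
        have := h0 h
        rw [one_smul] at this
        rw [← hh, this, _root_.map_zero]
      exact kill_zero.1 hk0 b hbs

end FR
end LC

namespace LC
open CategoryTheory CategoryTheory.Abelian

section lists
variable {R : Type u} [CommRing R]

/-- the ideal `I : y` -/
def col (I : Ideal R) (y : R) : Ideal R := Submodule.comap (LinearMap.mulLeft R y) I

lemma mem_col (I : Ideal R) (y : R) : ∀ a, a ∈ col I y ↔ y * a ∈ I := fun _ => Iff.rfl

lemma pr_eq_zero {J I K K' : Ideal R} {j : ℕ} (h : I ≤ K) (h' : I ≤ K') (e : K = K')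
    (z : H J j (Q I)) (hz : map J j (pr h) z = 0) : map J j (pr h') z = 0 := by
  subst e
  exact hz

lemma pr_comp {I K N : Ideal R} (h : I ≤ K) (h' : K ≤ N) : pr h ≫ pr h' = pr (h.trans h') := by
  apply ModuleCat.hom_ext
  apply Submodule.linearMap_qext
  rfl

lemma pr_pr {J I K N : Ideal R} {j : ℕ} (h : I ≤ K) (h' : K ≤ N) (z : H J j (Q I)) :
    map J j (pr h') (map J j (pr h) z) = map J j (pr (h.trans h')) z := by
  rw [← map_comp, pr_comp]

variable [IsLocalRing R] [IsNoetherianRing R]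

lemma dim_zero (A : Ideal R) (hA : maximalIdeal R ≤ A.radical) : ringKrullDim (R ⧸ A) ≤ 0 := by
  have : Ring.KrullDimLE 0 (R ⧸ A) := Ring.krullDimLE_zero_iff.mpr fun P hP =>
    Ideal.isMaximal_of_isIntegral_of_isMaximal_comap (R := R) _ <| by
      have h1 : (P.comap (algebraMap R (R ⧸ A))).IsPrime := hP.comap _
      have h2 : A ≤ P.comap (algebraMap R (R ⧸ A)) := by
        intro a ha
        rw [Ideal.mem_comap, Ideal.Quotient.algebraMap_eq, Ideal.Quotient.eq_zero_iff_mem.2 ha]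
        exact P.zero_mem
      have h3 : maximalIdeal R ≤ P.comap (algebraMap R (R ⧸ A)) :=
        hA.trans (h1.radical_le_iff.2 h2)
      rw [← (maximalIdeal.isMaximal R).eq_of_le h1.ne_top h3]
      infer_instance
  simpa using Ring.krullDimLE_iff.1 this

lemma dim_le (L : List R) : ∀ (A : Ideal R), (∀ l ∈ L, l ∈ maximalIdeal R) →
    maximalIdeal R ≤ (A ⊔ Ideal.ofList L).radical → ringKrullDim (R ⧸ A) ≤ (L.length : ℕ) := by
  induction L with
  | nil =>
    intro A _ h
    rw [Ideal.ofList_nil, sup_bot_eq] at h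
    simpa using dim_zero A h
  | cons y L ih =>
    intro A hL h
    rw [Ideal.ofList_cons, ← sup_assoc] at h
    have h1 := ih (A ⊔ Ideal.span {y}) (fun l hl => hL l (List.mem_cons_of_mem _ hl)) h
    have hy : y ∈ maximalIdeal R := hL y List.mem_cons_self
    have h2 := Module.supportDim_le_supportDim_quotSMulTop_succ_of_mem_jacobson (R := R)
      (M := R ⧸ A) (x := y) (by
        apply Ideal.ringJacobson_le_jacobson
        rw [ringJacobson_eq_maximalIdeal]
        exact hy)
    rw [Module.supportDim_quotient_eq_ringKrullDim,
      Module.supportDim_eq_ringKrullDim_quotient_annihilator] at h2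
    have hle : A ⊔ Ideal.span {y} ≤ Module.annihilator R (QuotSMulTop y (R ⧸ A)) := by
      rw [sup_le_iff, Ideal.span_singleton_le_iff_mem]
      constructor
      · intro a ha
        rw [Module.mem_annihilator]
        intro v
        obtain ⟨v, rfl⟩ := Submodule.mkQ_surjective _ v
        obtain ⟨v, rfl⟩ := Submodule.mkQ_surjective _ v
        rw [← LinearMap.map_smul]
        have : a • (A.mkQ v) = 0 := (mk_smul_eq_zero a v).2 (Ideal.mul_mem_right _ _ ha)
        rw [this, _root_.map_zero]
      · rw [Module.mem_annihilator]
        intro v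
        obtain ⟨v, rfl⟩ := Submodule.mkQ_surjective _ v
        rw [← LinearMap.map_smul]
        exact (Submodule.Quotient.mk_eq_zero _).2 (Submodule.smul_mem_pointwise_smul _ _ _ trivial)
    have h3 := ringKrullDim_le_of_surjective (Ideal.Quotient.factor hle)
      (Ideal.Quotient.factor_surjective hle)
    refine h2.trans ?_
    rw [List.length_cons, Nat.cast_add, Nat.cast_one]
    gcongr
    exact h3.trans h1

lemma FR_app (I C : Ideal R) (y : R) (L : List R) (hL : ∀ l ∈ L, l ∈ maximalIdeal R)
    (hrad : maximalIdeal R ≤ (I ⊔ Ideal.span {y} ⊔ Ideal.ofList L).radical)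
    (hC : ∃ k, maximalIdeal R ^ k ≤ C)
    (hK : ∀ j ≤ L.length, ∀ c ∈ C, Kill (maximalIdeal R) c j I) :
    col I y ≤ sat (maximalIdeal R) I := by
  intro b hb
  refine FRC (L.length + 1) I (I ⊔ Ideal.span {y}) C hC (fun j hj => hK j (by omega)) ?_ b ?_
  · refine (dim_le L _ hL hrad).trans_lt ?_
    exact_mod_cast Nat.lt_succ_self _
  · intro a ha
    have : I ⊔ Ideal.span {y} ≤ col I b := by
      rw [sup_le_iff, Ideal.span_singleton_le_iff_mem]
      exact ⟨fun a ha => I.mul_mem_left _ ha, by rw [mem_col, mul_comm]; exact hb⟩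
    have h := this ha
    rwa [mem_col, mul_comm] at h

/-- the standard condition along a list -/
def St (q : Ideal R) : Ideal R → List R → Prop
  | _, [] => True
  | I, y :: L => (∀ j ≤ L.length, ∀ r ∈ q, Kill (maximalIdeal R) r j I) ∧
      St q (I ⊔ Ideal.span {y}) L

lemma St_swap (q : Ideal R) (hq : q ≤ maximalIdeal R) (hqk : ∃ k, maximalIdeal R ^ k ≤ q)
    (I : Ideal R) (x y : R) (L : List R) (hx : x ∈ q) (hy : y ∈ q) (hL : ∀ l ∈ L, l ∈ q)
    (hI : q ≤ I ⊔ Ideal.ofList (x :: y :: L)) (h : St q I (x :: y :: L)) :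
    St q I (y :: x :: L) := by
  obtain ⟨K0, K1, h2⟩ := h
  have hcomm : I ⊔ Ideal.span {y} ⊔ Ideal.span {x} = I ⊔ Ideal.span {x} ⊔ Ideal.span {y} :=
    sup_right_comm _ _ _
  have hrad : maximalIdeal R ≤
      (I ⊔ Ideal.span {x} ⊔ Ideal.span {y} ⊔ Ideal.ofList L).radical := by
    obtain ⟨k, hk⟩ := hqk
    intro a ha
    refine ⟨k, ?_⟩
    have := hI (hk (Ideal.pow_mem_pow ha k))
    rwa [Ideal.ofList_cons, Ideal.ofList_cons, ← sup_assoc, ← sup_assoc] at this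
  have hLm : ∀ l ∈ L, l ∈ maximalIdeal R := fun l hl => hq (hL l hl)
  have Fx : col I x ≤ sat (maximalIdeal R) I := by
    refine FR_app I q x (y :: L) ?_ ?_ hqk ?_
    · intro l hl
      rcases List.mem_cons.1 hl with rfl | hl
      · exact hq hy
      · exact hLm l hl
    · rwa [Ideal.ofList_cons, ← sup_assoc]
    · exact K0
  have Fy : col I y ≤ sat (maximalIdeal R) I := by
    refine FR_app I q y (x :: L) ?_ ?_ hqk ?_
    · intro l hl
      rcases List.mem_cons.1 hl with rfl | hl
      · exact hq hx
      · exact hLm l hl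
    · rwa [Ideal.ofList_cons, ← sup_assoc, hcomm]
    · exact K0
  have Fxy : col (I ⊔ Ideal.span {x}) y ≤ sat (maximalIdeal R) (I ⊔ Ideal.span {x}) :=
    FR_app _ q y L hLm hrad hqk K1
  have Fyx : col (I ⊔ Ideal.span {y}) x ≤ sat (maximalIdeal R) (I ⊔ Ideal.span {y}) := by
    refine FR_app _ (q * q) x L hLm (by rwa [hcomm]) ?_ ?_
    · obtain ⟨k, hk⟩ := hqk
      exact ⟨k + k, by rw [pow_add]; exact Ideal.mul_mono hk hk⟩
    · intro j hj
      suffices h : q * q ≤ killer (maximalIdeal R) j (I ⊔ Ideal.span {y}) from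
        fun c hc => h hc
      rw [Ideal.mul_le]
      intro r hr s hs ξ
      obtain ⟨h, hh⟩ := E2 (mem_col I y) Fy (K0 (j + 1) (by simpa using hj) s hs) ξ
      rw [mul_smul, ← hh, ← LinearMap.map_smul, K0 j (by simp; omega) r hr, _root_.map_zero]
  have S1 : ∀ j ≤ L.length, Kill (maximalIdeal R) x j (I ⊔ Ideal.span {y}) := by
    intro j hj ξ
    obtain ⟨h, hh⟩ := E2 (mem_col I y) Fy (K0 (j + 1) (by simpa using hj) x hx) ξ
    have e1 : map (maximalIdeal R) j (pg (I ⊔ Ideal.span {y}) x)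
        (map (maximalIdeal R) j (pg I y) h) = 0 := by
      rw [hh, LinearMap.map_smul]
      exact Kill.of_mem (Ideal.mem_sup_right (Ideal.mem_span_singleton_self x)) _
    have e2 : map (maximalIdeal R) j (pg (I ⊔ Ideal.span {x}) y)
        (map (maximalIdeal R) j (pg I x) h) = 0 := by
      unfold pg at e1 ⊢
      rw [pr_pr] at e1 ⊢
      exact pr_eq_zero _ _ hcomm _ e1
    obtain ⟨h', e3⟩ := E1 (mem_col (I ⊔ Ideal.span {x}) y) Fxy _ e2
    rw [K1 j hj y hy] at e3
    obtain ⟨h'', e4⟩ := E1 (mem_col I x) Fx _ e3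
    rw [K0 j (by simp; omega) x hx] at e4
    rw [← hh, e4, _root_.map_zero]
  refine ⟨K0, ?_, by rwa [hcomm]⟩
  intro j hj r hr
  have hyx : ∀ j, j + 1 ≤ L.length → Kill (maximalIdeal R) r j
      (I ⊔ Ideal.span {y} ⊔ Ideal.span {x}) := by
    intro j hj
    rw [hcomm]
    cases L with
    | nil => simp at hj
    | cons l L => exact h2.1 j (by simpa using hj) r hr
  cases j with
  | succ j =>
    intro ξ
    exact E3 (mem_col (I ⊔ Ideal.span {y}) x) Fyx (hyx j hj) ξ (S1 (j + 1) hj ξ)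
  | zero =>
    by_cases hL0 : L = []
    · subst hL0
      have : q ≤ killer (maximalIdeal R) 0 (I ⊔ Ideal.span {y}) := by
        refine hI.trans ?_
        rw [Ideal.ofList_cons, Ideal.ofList_cons, Ideal.ofList_nil, sup_bot_eq, sup_le_iff,
          sup_le_iff, Ideal.span_singleton_le_iff_mem, Ideal.span_singleton_le_iff_mem]
        exact ⟨fun a ha => Kill.of_mem (Ideal.mem_sup_left ha), S1 0 hj,
          Kill.of_mem (Ideal.mem_sup_right (Ideal.mem_span_singleton_self y))⟩
      exact this hr
    · intro ξ
      have e : map (maximalIdeal R) 0 (pg (I ⊔ Ideal.span {y}) x) (r • ξ) = 0 := by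
        rw [LinearMap.map_smul]
        exact hyx 0 (List.length_pos_iff.2 hL0) _
      obtain ⟨h', e3⟩ := E1 (mem_col (I ⊔ Ideal.span {y}) x) Fyx _ e
      rw [e3, S1 0 hj]

lemma ofList_perm {L L' : List R} (h : L.Perm L') : Ideal.ofList L = Ideal.ofList L' := by
  unfold Ideal.ofList
  congr 1
  ext a
  exact h.mem_iff

lemma St_perm (q : Ideal R) (hq : q ≤ maximalIdeal R) (hqk : ∃ k, maximalIdeal R ^ k ≤ q)
    {L L' : List R} (p : L.Perm L') : ∀ I : Ideal R, (∀ l ∈ L, l ∈ q) →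
    q ≤ I ⊔ Ideal.ofList L → St q I L → St q I L' := by
  induction p with
  | nil => intro I _ _ h; exact h
  | cons y p ih =>
    intro I hL hI h
    refine ⟨by rw [← p.length_eq]; exact h.1, ih _ (fun l hl => hL l (List.mem_cons_of_mem _ hl))
      ?_ h.2⟩
    rwa [Ideal.ofList_cons, ← sup_assoc] at hI
  | swap x y L =>
    intro I hL hI h
    exact St_swap q hq hqk I y x L (hL _ (by simp)) (hL _ (by simp))
      (fun l hl => hL l (by simp [hl])) hI h
  | trans p1 p2 ih1 ih2 =>
    intro I hL hI h
    exact ih2 I (fun l hl => hL l (p1.mem_iff.2 hl)) (by rwa [← ofList_perm p1])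
      (ih1 I hL hI h)

lemma St_iff (q : Ideal R) (L : List R) : ∀ I : Ideal R, St q I L ↔
    ∀ p j, p + j < L.length → ∀ r ∈ q,
      Kill (maximalIdeal R) r j (I ⊔ Ideal.ofList (L.take p)) := by
  induction L with
  | nil => intro I; simp [St]
  | cons y L ih =>
    intro I
    rw [St, ih]
    constructor
    · rintro ⟨h1, h2⟩ p j hp r hr
      cases p with
      | zero =>
        rw [List.take_zero, Ideal.ofList_nil, sup_bot_eq]
        exact h1 j (by simp at hp; omega) r hr
      | succ p =>
        rw [List.take_succ_cons, Ideal.ofList_cons, ← sup_assoc]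
        exact h2 p j (by simp at hp; omega) r hr
    · intro h
      constructor
      · intro j hj r hr
        have := h 0 j (by simp; omega) r hr
        rwa [List.take_zero, Ideal.ofList_nil, sup_bot_eq] at this
      · intro p j hp r hr
        have := h (p + 1) j (by simp; omega) r hr
        rwa [List.take_succ_cons, Ideal.ofList_cons, ← sup_assoc] at this

end lists
end LC

namespace LC
open CategoryTheory CategoryTheory.Abelian

section powers
variable {R : Type u} [CommRing R] {d : ℕ}

/-- the ideal generated by the `x i ^ m i`, `i ∈ S` -/
def aa (x : Fin d → R) (S : Finset (Fin d)) (m : Fin d → ℕ) : Ideal R :=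
  Ideal.span ((fun i => x i ^ m i) '' (S : Set (Fin d)))

lemma aa_congr (x : Fin d → R) (S : Finset (Fin d)) {m m' : Fin d → ℕ}
    (h : ∀ i ∈ S, m i = m' i) : aa x S m = aa x S m' := by
  unfold aa
  congr 1
  apply Set.image_congr
  intro i hi
  simp only [h i hi]

lemma aa_insert (x : Fin d → R) (S : Finset (Fin d)) (m : Fin d → ℕ) (i : Fin d) :
    aa x (insert i S) m = aa x S m ⊔ Ideal.span {x i ^ m i} := by
  unfold aa
  rw [Finset.coe_insert, Set.image_insert_eq, Ideal.span_insert, sup_comm]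

lemma mem_aa (x : Fin d → R) {S : Finset (Fin d)} (m : Fin d → ℕ) {i : Fin d} (hi : i ∈ S) :
    x i ^ m i ∈ aa x S m := Ideal.subset_span ⟨i, hi, rfl⟩

/-- a list enumerating S, then i, then the rest -/
noncomputable def enum (S : Finset (Fin d)) (i : Fin d) : List (Fin d) :=
  S.toList ++ i :: (insert i S)ᶜ.toList

lemma enum_nodup (S : Finset (Fin d)) (i : Fin d) (hi : i ∉ S) : (enum S i).Nodup := by
  unfold enum
  rw [List.nodup_append]
  refine ⟨S.nodup_toList, ?_, ?_⟩
  · rw [List.nodup_cons]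
    exact ⟨by simp, Finset.nodup_toList _⟩
  · intro a ha b hb
    rw [Finset.mem_toList] at ha
    rintro rfl
    simp only [List.mem_cons, Finset.mem_toList, Finset.mem_compl, Finset.mem_insert, not_or] at hb
    rcases hb with rfl | hb
    · exact hi ha
    · exact hb.2 ha

lemma mem_enum (S : Finset (Fin d)) (i a : Fin d) : a ∈ enum S i := by
  unfold enum
  simp only [List.mem_append, List.mem_cons, Finset.mem_toList, Finset.mem_compl,
    Finset.mem_insert]
  tauto

lemma enum_perm (S : Finset (Fin d)) (i : Fin d) (hi : i ∉ S) :
    (List.finRange d).Perm (enum S i) := by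
  rw [List.perm_ext_iff_of_nodup (List.nodup_finRange d) (enum_nodup S i hi)]
  intro a
  simp [mem_enum]

lemma enum_length (S : Finset (Fin d)) (i : Fin d) (hi : i ∉ S) : (enum S i).length = d := by
  rw [← (enum_perm S i hi).length_eq, List.length_finRange]

lemma enum_take (S : Finset (Fin d)) (i : Fin d) : (enum S i).take S.card = S.toList := by
  unfold enum
  rw [List.take_left']
  simp

/-- permutation with `S` first, then `i` -/
lemma exists_perm (S : Finset (Fin d)) (i : Fin d) (hi : i ∉ S) :
    ∃ σ : Equiv.Perm (Fin d), (∀ j : Fin d, (j : ℕ) < S.card ↔ σ j ∈ S) ∧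
      ∀ j : Fin d, (j : ℕ) = S.card → σ j = i := by
  let e := List.Nodup.getEquivOfForallMemList (enum S i) (enum_nodup S i hi) (mem_enum S i)
  refine ⟨(finCongr (enum_length S i hi).symm).trans e, ?_, ?_⟩
  · intro j
    have hval : ((finCongr (enum_length S i hi).symm).trans e) j =
      (enum S i)[(j : ℕ)]'(by rw [enum_length S i hi]; exact j.2) := rfl
    rw [hval]
    constructor
    · intro hj
      have : (enum S i)[(j : ℕ)]'(by rw [enum_length S i hi]; exact j.2) =
          S.toList[(j : ℕ)]'(by simpa using hj) := by
        unfold enum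
        rw [List.getElem_append_left]
      rw [this, ← Finset.mem_toList]
      exact List.getElem_mem _
    · intro hj
      by_contra hlt
      have hnd := enum_nodup S i hi
      obtain ⟨k, hk, hk2⟩ := List.getElem_of_mem (Finset.mem_toList.2 hj)
      have hk3 : k < (enum S i).length := by unfold enum; rw [List.length_append]; omega
      have : (enum S i)[k] = S.toList[k] := List.getElem_append_left hk
      rw [hk2] at this
      have := (hnd.getElem_inj_iff).1 this
      rw [Finset.length_toList] at hk
      omega
  · intro j hj
    have hval : ((finCongr (enum_length S i hi).symm).trans e) j =
      (enum S i)[(j : ℕ)]'(by rw [enum_length S i hi]; exact j.2) := rfl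
    rw [hval]
    unfold enum
    rw [List.getElem_append_right (by simp [hj])]
    simp [hj]

end powers
end LC

namespace LC
open CategoryTheory CategoryTheory.Abelian

section forward
variable {R : Type u} [CommRing R] [IsLocalRing R] [IsNoetherianRing R] {d : ℕ}

lemma FRa (x : Fin d → R) (hq : Ideal.span (Set.range x) ≤ maximalIdeal R)
    (hqk : ∃ k, maximalIdeal R ^ k ≤ Ideal.span (Set.range x))
    (S : Finset (Fin d)) (m : Fin d → ℕ) (i : Fin d) (hi : i ∉ S) (t : ℕ)
    (hK : ∀ j, j + S.card < d → ∀ r ∈ Ideal.span (Set.range x),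
      Kill (maximalIdeal R) r j (aa x S m)) :
    col (aa x S m) (x i ^ t) ≤ sat (maximalIdeal R) (aa x S m) := by
  have hxm : ∀ i, x i ∈ maximalIdeal R := fun i => hq (Ideal.subset_span ⟨i, rfl⟩)
  refine FR_app _ (Ideal.span (Set.range x)) _ ((insert i S)ᶜ.toList.map x) ?_ ?_ hqk ?_
  · intro l hl
    obtain ⟨k, -, rfl⟩ := List.mem_map.1 hl
    exact hxm k
  · have h1 : Ideal.span (Set.range x) ≤ (aa x S m ⊔ Ideal.span {x i ^ t} ⊔
        Ideal.ofList ((insert i S)ᶜ.toList.map x)).radical := by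
      rw [Ideal.span_le]
      rintro _ ⟨k, rfl⟩
      by_cases hk : k ∈ S
      · exact ⟨m k, Ideal.mem_sup_left (Ideal.mem_sup_left (mem_aa x m hk))⟩
      by_cases hki : k = i
      · subst hki
        exact ⟨t, Ideal.mem_sup_left (Ideal.mem_sup_right (Ideal.mem_span_singleton_self _))⟩
      · refine Ideal.le_radical (Ideal.mem_sup_right (Ideal.subset_span ?_))
        refine List.mem_map.2 ⟨k, ?_, rfl⟩
        simp [hk, hki]
    obtain ⟨k, hk⟩ := hqk
    intro a ha
    obtain ⟨n, hn⟩ := h1 (hk (Ideal.pow_mem_pow ha k))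
    exact ⟨k * n, by rwa [pow_mul]⟩
  · intro j hj
    apply hK
    have h1 := Finset.card_compl (insert i S)
    rw [List.length_map, Finset.length_toList, h1, Finset.card_insert_of_notMem hi,
      Fintype.card_fin] at hj
    have h2 : (insert i S).card ≤ d := by simpa using Finset.card_le_univ (insert i S)
    rw [Finset.card_insert_of_notMem hi] at h2
    omega

/-- all powers version of standardness -/
def PP (x : Fin d → R) (m : Fin d → ℕ) : Prop :=
  ∀ (S : Finset (Fin d)) (j : ℕ), j + S.card < d → ∀ r ∈ Ideal.span (Set.range x),
      Kill (maximalIdeal R) r j (aa x S m)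

lemma PP_update (x : Fin d → R) (hq : Ideal.span (Set.range x) ≤ maximalIdeal R)
    (hqk : ∃ k, maximalIdeal R ^ k ≤ Ideal.span (Set.range x))
    (m : Fin d → ℕ) (h : PP x m) (i : Fin d) (hm : m i = 1) (a : ℕ) :
    PP x (Function.update m i (a + 1)) := by
  intro S j hj r hr
  by_cases hi : i ∈ S
  · have hins : S = insert i (S.erase i) := (Finset.insert_erase hi).symm
    have hcard : (S.erase i).card + 1 = S.card := Finset.card_erase_add_one hi
    have hni : i ∉ S.erase i := Finset.notMem_erase i S
    generalize S.erase i = T at *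
    subst hins
    have hxi : x i ∈ Ideal.span (Set.range x) := Ideal.subset_span ⟨i, rfl⟩
    rw [aa_insert, Function.update_self, aa_congr x T (m' := m)]
    · have hF := fun t => FRa x hq hqk T m i hni t (h T)
      have hle : ∀ t, col (aa x T m) (x i ^ t) ≤ col (aa x T m) (x i) := by
        intro t b hb
        exact kill_zero.1 (h T 0 (by omega) _ hxi) b (hF t hb)
      have hF1 := hF 1
      rw [pow_one] at hF1
      refine E4 (mem_col (aa x T m) (x i)) hF1 ?_ (h T (j + 1) (by omega) _ hxi)
        (h T j (by omega) r hr) ?_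
      · intro b
        constructor
        · intro hb
          rw [mem_col] at hb
          rw [pow_succ, mul_assoc]
          exact Ideal.mul_mem_left _ _ hb
        · exact fun hb => hle (a + 1) hb
      · have := h (insert i T) j (by omega) r hr
        rwa [aa_insert, hm, pow_one] at this
    · intro k hk
      exact Function.update_of_ne (ne_of_mem_of_not_mem hk hni) _ _
  · rw [aa_congr x S (m' := m)]
    · exact h S j hj r hr
    · intro k hk
      exact Function.update_of_ne (ne_of_mem_of_not_mem hk hi) _ _

lemma PP_all (x : Fin d → R) (hq : Ideal.span (Set.range x) ≤ maximalIdeal R)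
    (hqk : ∃ k, maximalIdeal R ^ k ≤ Ideal.span (Set.range x))
    (h : PP x (fun _ => 1)) (m : Fin d → ℕ) (hm : ∀ j, 1 ≤ m j) : PP x m := by
  have key : ∀ T : Finset (Fin d), PP x (fun i => if i ∈ T then m i else 1) := by
    intro T
    induction T using Finset.induction_on with
    | empty => simpa using h
    | insert i T hi ih =>
      have := PP_update x hq hqk _ ih i (by simp [hi]) (m i - 1)
      convert this using 1
      funext k
      by_cases hk : k = i
      · subst hk
        have := hm k
        simp
        omega
      · simp [hk]
  simpa using key Finset.univ

lemma PP_one (x : Fin d → R) (hq : Ideal.span (Set.range x) ≤ maximalIdeal R)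
    (hqk : ∃ k, maximalIdeal R ^ k ≤ Ideal.span (Set.range x))
    (h : ∀ p j, p + j < d → ∀ r ∈ Ideal.span (Set.range x),
      Kill (maximalIdeal R) r j (Ideal.span (x '' {k : Fin d | (k : ℕ) < p}))) :
    PP x (fun _ => 1) := by
  have hofl : ∀ L : List (Fin d), Ideal.ofList (L.map x) = Ideal.span (x '' {k | k ∈ L}) := by
    intro L
    unfold Ideal.ofList
    congr 1
    ext a
    simp
  have h0 : St (Ideal.span (Set.range x)) ⊥ ((List.finRange d).map x) := by
    rw [St_iff]
    intro p j hp r hr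
    rw [bot_sup_eq, ← List.map_take, hofl]
    have hp' : p + j < d := by simpa using hp
    convert h p j hp' r hr using 4
    ext k
    rw [List.mem_take_iff_getElem]
    constructor
    · rintro ⟨i, hi, rfl⟩
      simp at hi ⊢
      omega
    · intro hk
      exact ⟨k, by simp; omega, by simp⟩
  intro S j hj r hr
  have hex : ∃ i, i ∉ S := by
    by_contra hcon
    push Not at hcon
    have : S = Finset.univ := Finset.eq_univ_iff_forall.2 hcon
    subst this
    simp at hj
  obtain ⟨i, hi⟩ := hex
  have h1 : St (Ideal.span (Set.range x)) ⊥ ((enum S i).map x) := by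
    refine St_perm _ hq hqk ((enum_perm S i hi).map x) ⊥ ?_ ?_ h0
    · intro l hl
      obtain ⟨k, -, rfl⟩ := List.mem_map.1 hl
      exact Ideal.subset_span ⟨k, rfl⟩
    · rw [bot_sup_eq, hofl]
      simp
  rw [St_iff] at h1
  have h2 := h1 S.card j (by rw [List.length_map, enum_length S i hi]; omega) r hr
  rw [bot_sup_eq, ← List.map_take, enum_take, hofl] at h2
  convert h2 using 1
  unfold aa
  simp

lemma fwd (x : Fin d → R) (hq : Ideal.span (Set.range x) ≤ maximalIdeal R)
    (hqk : ∃ k, maximalIdeal R ^ k ≤ Ideal.span (Set.range x)) (m : Fin d → ℕ)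
    (h : PP x m) (S : Finset (Fin d)) (i k : Fin d) (hi : i ∉ S) (hk : k ∉ S) (b : R)
    (hm : 1 ≤ m k)
    (hb : x i ^ m i * x k ^ m k * b ∈ aa x S m) : x k ^ m k * b ∈ aa x S m := by
  have hS : S.card < d := by
    have h2 : (insert i S).card ≤ d := by simpa using Finset.card_le_univ (insert i S)
    rw [Finset.card_insert_of_notMem hi] at h2
    omega
  have hk0 : ∀ a ∈ sat (maximalIdeal R) (aa x S m), x k ^ m k * a ∈ aa x S m := by
    intro a ha
    refine kill_zero.1 (h S 0 (by omega) _ ?_) a ha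
    obtain ⟨n, hn⟩ : ∃ n, m k = n + 1 := ⟨m k - 1, by omega⟩
    rw [hn, pow_succ]
    exact Ideal.mul_mem_left _ _ (Ideal.subset_span ⟨k, rfl⟩)
  have h1 : x k ^ m k * b ∈ sat (maximalIdeal R) (aa x S m) := by
    apply FRa x hq hqk S m i hi (m i) (h S)
    rw [mem_col, ← mul_assoc]
    exact hb
  have h2 := hk0 _ h1
  apply hk0
  apply FRa x hq hqk S m k hk (m k + m k) (h S)
  rw [mem_col, pow_add, mul_assoc]
  exact h2

end forward
end LC

namespace LC
open CategoryTheory CategoryTheory.Abelian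

section final
variable {R : Type u} [CommRing R] [IsLocalRing R] [IsNoetherianRing R] {d : ℕ}

lemma mem_colon_span {I : Ideal R} {y b : R} :
    b ∈ I.colon (Ideal.span {y} : Ideal R) ↔ y * b ∈ I := by
  rw [Submodule.mem_colon]
  constructor
  · intro h
    have := h y (Ideal.mem_span_singleton_self y)
    rwa [smul_eq_mul, mul_comm] at this
  · intro h p hp
    obtain ⟨c, rfl⟩ := Ideal.mem_span_singleton.1 hp
    rw [smul_eq_mul]
    have := I.mul_mem_left c h
    convert this using 1
    ring

lemma usd_of_PP (x : Fin d → R) (hq : Ideal.span (Set.range x) ≤ maximalIdeal R)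
    (hqk : ∃ k, maximalIdeal R ^ k ≤ Ideal.span (Set.range x))
    (h : PP x (fun _ => 1)) : IsUSDSequence x := by
  intro m hm σ i hi k hik
  let S : Finset (Fin d) := (Finset.univ.filter (fun j : Fin d => (j : ℕ) < i)).image σ
  have hS : Ideal.span ((fun j => x (σ j) ^ m (σ j)) '' {j : Fin d | (j : ℕ) < i}) = aa x S m := by
    unfold aa
    congr 1
    ext a
    simp only [S, Finset.coe_image, Finset.coe_filter, Finset.mem_univ, true_and, Set.image_image]
  have hmem : ∀ l : Fin d, i ≤ (l : ℕ) → σ l ∉ S := by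
    intro l hl hmem
    simp only [S, Finset.mem_image, Finset.mem_filter, Finset.mem_univ, true_and] at hmem
    obtain ⟨j, hj, e⟩ := hmem
    have := σ.injective e
    subst this
    omega
  ext b
  rw [mem_colon_span, mem_colon_span, hS]
  constructor
  · intro hb
    exact fwd x hq hqk m (PP_all x hq hqk h m hm) S (σ ⟨i, hi⟩) (σ k) (hmem _ le_rfl) (hmem k hik)
      b (hm _) hb
  · intro hb
    rw [mul_assoc]
    exact Ideal.mul_mem_left _ _ hb

lemma usd_colon (x : Fin d → R) (h : IsUSDSequence x) (S : Finset (Fin d)) (m : Fin d → ℕ)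
    (hm : ∀ j, 1 ≤ m j) (i k : Fin d) (hi : i ∉ S) (hk : k ∉ S) (b : R)
    (hb : x i ^ m i * (x k ^ m k * b) ∈ aa x S m) : x k ^ m k * b ∈ aa x S m := by
  obtain ⟨σ, h1, h2⟩ := exists_perm S i hi
  have hcard : S.card < d := by
    have h2 : (insert i S).card ≤ d := by simpa using Finset.card_le_univ (insert i S)
    rw [Finset.card_insert_of_notMem hi] at h2
    omega
  have hS : Ideal.span ((fun j => x (σ j) ^ m (σ j)) '' {j : Fin d | (j : ℕ) < S.card}) =
      aa x S m := by
    unfold aa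
    congr 1
    ext a
    simp only [Set.mem_image]
    constructor
    · rintro ⟨j, hj, rfl⟩
      exact ⟨σ j, (h1 j).1 hj, rfl⟩
    · rintro ⟨j, hj, rfl⟩
      refine ⟨σ.symm j, (h1 _).2 ?_, ?_⟩
      · rw [Equiv.apply_symm_apply]; exact hj
      · simp only [Equiv.apply_symm_apply]
  have h3 := h m hm σ S.card hcard (σ.symm k) (by
    by_contra hlt
    have := (h1 (σ.symm k)).1 (by omega)
    rw [Equiv.apply_symm_apply] at this
    exact hk this)
  simp only [h2 ⟨S.card, hcard⟩ rfl, Equiv.apply_symm_apply, hS] at h3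
  rw [← mem_colon_span, ← h3, mem_colon_span, mul_assoc]
  exact hb

lemma usd_two (x : Fin d → R) (h : IsUSDSequence x) (S : Finset (Fin d)) (m : Fin d → ℕ)
    (hm : ∀ j, 1 ≤ m j) (i k : Fin d) (hi : i ∉ S) (hk : k ∉ S) (hik : i ≠ k) (N : ℕ) (hN : 1 ≤ N)
    (b : R) (hb : x i ^ N * b ∈ aa x S m) : x k * b ∈ aa x S m := by
  have e : aa x S (Function.update (Function.update m i N) k 1) = aa x S m := by
    apply aa_congr
    intro j hj
    rw [Function.update_of_ne (ne_of_mem_of_not_mem hj hk),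
      Function.update_of_ne (ne_of_mem_of_not_mem hj hi)]
  have := usd_colon x h S (Function.update (Function.update m i N) k 1) (by
    intro j
    by_cases h1 : j = k
    · subst h1; simp
    by_cases h2 : j = i
    · subst h2; simp [h1, hN]
    · simp [h1, h2, hm]) i k hi hk b
  rw [e, Function.update_self, Function.update_of_ne hik, Function.update_self, pow_one] at this
  apply this
  rw [mul_left_comm]
  exact Ideal.mul_mem_left _ _ hb

lemma usd_one (x : Fin d → R) (h : IsUSDSequence x) (S : Finset (Fin d)) (m : Fin d → ℕ)
    (hm : ∀ j, 1 ≤ m j) (i : Fin d) (hi : i ∉ S) (N : ℕ)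
    (b : R) (hb : x i ^ N * b ∈ aa x S m) : x i * b ∈ aa x S m := by
  have step : ∀ t, 1 ≤ t → x i ^ (t + t) * b ∈ aa x S m → x i ^ t * b ∈ aa x S m := by
    intro t ht hb
    have e : aa x S (Function.update m i t) = aa x S m := by
      apply aa_congr
      intro j hj
      rw [Function.update_of_ne (ne_of_mem_of_not_mem hj hi)]
    have := usd_colon x h S (Function.update m i t) (by
      intro j
      by_cases h1 : j = i
      · subst h1; simpa using ht
      · simp [h1, hm]) i i hi hi b
    rw [e, Function.update_self] at this
    apply this
    rwa [← mul_assoc, ← pow_add]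
  have key : ∀ e : ℕ, x i ^ (2 ^ e) * b ∈ aa x S m → x i * b ∈ aa x S m := by
    intro e
    induction e with
    | zero => intro h; simpa using h
    | succ e ih =>
      intro h
      apply ih
      apply step _ Nat.one_le_two_pow
      rwa [pow_succ, mul_two] at h
  apply key N
  have : N ≤ 2 ^ N := Nat.lt_two_pow_self.le
  obtain ⟨c, hc⟩ := Nat.exists_eq_add_of_le this
  rw [hc, add_comm, pow_add, mul_assoc]
  exact Ideal.mul_mem_left _ _ hb

lemma usd_FR (x : Fin d → R) (hqk : ∃ k, maximalIdeal R ^ k ≤ Ideal.span (Set.range x))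
    (h : IsUSDSequence x) (S : Finset (Fin d)) (m : Fin d → ℕ)
    (hm : ∀ j, 1 ≤ m j) (i : Fin d) (hi : i ∉ S) (N : ℕ) (hN : 1 ≤ N) :
    col (aa x S m) (x i ^ N) ≤ sat (maximalIdeal R) (aa x S m) := by
  intro b hb
  rw [mem_col] at hb
  have h1 : Ideal.span (Set.range x) ≤ (col (aa x S m) b).radical := by
    rw [Ideal.span_le]
    rintro _ ⟨k, rfl⟩
    by_cases hk : k ∈ S
    · refine ⟨m k, ?_⟩
      rw [mem_col]
      exact Ideal.mul_mem_left _ _ (mem_aa x m hk)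
    · apply Ideal.le_radical
      rw [mem_col, mul_comm]
      by_cases hik : i = k
      · subst hik
        exact usd_one x h S m hm i hi N b hb
      · exact usd_two x h S m hm i k hi hk hik N hN b hb
  have h2 : maximalIdeal R ≤ (col (aa x S m) b).radical := by
    obtain ⟨k, hk⟩ := hqk
    intro a ha
    obtain ⟨n, hn⟩ := h1 (hk (Ideal.pow_mem_pow ha k))
    exact ⟨k * n, by rwa [pow_mul]⟩
  obtain ⟨n, hn⟩ := Ideal.exists_pow_le_of_le_radical_of_fg h2 (IsNoetherian.noetherian _)
  refine ⟨n, fun s hs => ?_⟩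
  have := hn hs
  rwa [mem_col, mul_comm] at this

lemma usd_kill (x : Fin d → R) (hq : Ideal.span (Set.range x) ≤ maximalIdeal R)
    (hqk : ∃ k, maximalIdeal R ^ k ≤ Ideal.span (Set.range x))
    (h : IsUSDSequence x) (j : ℕ) : ∀ (S : Finset (Fin d)) (m : Fin d → ℕ), (∀ j, 1 ≤ m j) →
    j + S.card < d → ∀ k, k ∉ S → Kill (maximalIdeal R) (x k) j (aa x S m) := by
  have hxm : ∀ i, x i ∈ maximalIdeal R := fun i => hq (Ideal.subset_span ⟨i, rfl⟩)
  induction j with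
  | zero =>
    intro S m hm _ k hk
    rw [kill_zero]
    rintro a ⟨n, hn⟩
    exact usd_one x h S m hm k hk n a (hn _ (Ideal.pow_mem_pow (hxm k) n))
  | succ j ih =>
    intro S m hm hj k hk ξ
    obtain ⟨i, hi⟩ : ∃ i, i ∉ insert k S := by
      by_contra hcon
      push Not at hcon
      have h1 : insert k S = Finset.univ := Finset.eq_univ_iff_forall.2 hcon
      have h2 := Finset.card_insert_of_notMem hk
      rw [h1, Finset.card_univ, Fintype.card_fin] at h2
      omega
    rw [Finset.mem_insert, not_or] at hi
    obtain ⟨n, hn⟩ := torsion (maximalIdeal R) _ _ ξ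
    have hn1 : x i ^ (n + 1) • ξ = 0 :=
      hn _ (Ideal.pow_le_pow_right (Nat.le_succ n) (Ideal.pow_mem_pow (hxm i) (n + 1)))
    refine E3 (mem_col _ _) (usd_FR x hqk h S m hm i hi.2 (n + 1) (by omega)) ?_ ξ hn1
    have h3 := ih (insert i S) (Function.update m i (n + 1)) (by
      intro j
      by_cases h1 : j = i
      · subst h1; simp
      · simp [h1, hm]) (by rw [Finset.card_insert_of_notMem hi.2]; omega) k (by
        rw [Finset.mem_insert, not_or]
        exact ⟨fun e => hi.1 e.symm, hk⟩)
    rwa [aa_insert, Function.update_self, aa_congr x S (m' := m)] at h3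
    intro l hl
    rw [Function.update_of_ne (ne_of_mem_of_not_mem hl hi.2)]

lemma standard_iff (x : Fin d → R) : IsStandardSOP x ↔
    ∀ p j, p + j < d → ∀ r ∈ Ideal.span (Set.range x),
      Kill (maximalIdeal R) r j (Ideal.span (x '' {k : Fin d | (k : ℕ) < p})) := by
  constructor
  · intro h p j hp r hr
    exact (bridge _ _ _ r).1 (h (p + 1) j (by omega) (by omega) r hr)
  · intro h i j hi hij r hr
    exact (bridge _ _ _ r).2 (h (i - 1) j (by omega) r hr)

lemma usd_standard (x : Fin d → R) (hq : Ideal.span (Set.range x) ≤ maximalIdeal R)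
    (hqk : ∃ k, maximalIdeal R ^ k ≤ Ideal.span (Set.range x))
    (h : IsUSDSequence x) : IsStandardSOP x := by
  rw [standard_iff]
  intro p j hp
  suffices hs : Ideal.span (Set.range x) ≤ killer (maximalIdeal R) j
      (Ideal.span (x '' {k : Fin d | (k : ℕ) < p})) from fun r hr => hs hr
  rw [Ideal.span_le]
  rintro _ ⟨k, rfl⟩
  by_cases hk : (k : ℕ) < p
  · exact Kill.of_mem (Ideal.subset_span ⟨k, hk, rfl⟩)
  · have hcard : (Finset.univ.filter (fun k : Fin d => (k : ℕ) < p)).card ≤ p := by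
      have : (Finset.univ.filter (fun k : Fin d => (k : ℕ) < p)).card ≤ (Finset.range p).card :=
        Finset.card_le_card_of_injOn (fun k => (k : ℕ)) (by
          intro a ha
          simpa using ha) (fun a _ b _ e => Fin.ext e)
      simpa using this
    have := usd_kill x hq hqk h j (Finset.univ.filter (fun k : Fin d => (k : ℕ) < p)) (fun _ => 1)
      (fun _ => le_rfl) (by omega) k (by simpa using hk)
    unfold aa at this
    simp only [pow_one, Finset.coe_filter, Finset.mem_univ, true_and] at this
    exact this

end final
end LC

/-- a system of parameters of a Noetherian local ring is standard iff it is an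
unconditioned strong d-sequence. -/
theorem stmt7 {R : Type u} [CommRing R] [IsLocalRing R] [IsNoetherianRing R]
    (d : ℕ) (hd : ringKrullDim R = d) (x : Fin d → R)
    (hsop : (Ideal.span (Set.range x)).radical = maximalIdeal R) :
    IsStandardSOP x ↔ IsUSDSequence x := by
  have hq : Ideal.span (Set.range x) ≤ maximalIdeal R := hsop ▸ Ideal.le_radical
  have hqk : ∃ k, maximalIdeal R ^ k ≤ Ideal.span (Set.range x) :=
    Ideal.exists_pow_le_of_le_radical_of_fg hsop.ge (IsNoetherian.noetherian _)
  exact ⟨fun h => LC.usd_of_PP x hq hqk (LC.PP_one x hq hqk ((LC.standard_iff x).1 h)),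
    fun h => LC.usd_standard x hq hqk h⟩
end

section
/- Let (R,m) be a generalized Cohen–Macaulay Noetherian local ring, i.e., H_m^i(R) has finite length for all i < dim R. Then there exists t ∈ ℕ such that every system of parameters contained in m^t is an unconditioned strong d-sequence. In particular, for any system of parameters x_1,...,x_d, the powers x_1^n,...,x_d^n form a USD-sequence for all n ≫ 0. -/
universe u

open IsLocalRing

namespace GCM
open CategoryTheory Limits Opposite
section generic
variable {C D : Type*} [Category* C] [Category* D] [Abelian C] [Abelian D] [EnoughProjectives C]

noncomputable def hh (i : ℕ) (L : ChainComplex D ℕ) {I : D} (κ : L.X i ⟶ I)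
    (hκ : L.d (i+1) i ≫ κ = 0) : L.homology i ⟶ I :=
  L.homologyι i ≫ L.descOpcycles κ (i+1) (by simp) hκ

lemma hh_post (i : ℕ) (L : ChainComplex D ℕ) {I J : D} (κ : L.X i ⟶ I)
    (hκ : L.d (i+1) i ≫ κ = 0) (w : I ⟶ J) :
    hh i L (κ ≫ w) (by rw [reassoc_of% hκ, zero_comp]) = hh i L κ hκ ≫ w := by
  unfold hh
  rw [Category.assoc]
  refine congrArg (fun z => _ ≫ z) ?_
  rw [← cancel_epi (L.pOpcycles _), HomologicalComplex.p_descOpcycles_assoc,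
    HomologicalComplex.p_descOpcycles]

lemma hh_map (i : ℕ) (L L' : ChainComplex D ℕ) (φ : L' ⟶ L) {I : D} (κ : L.X i ⟶ I)
    (hκ : L.d (i+1) i ≫ κ = 0) :
    HomologicalComplex.homologyMap φ i ≫ hh i L κ hκ =
      hh i L' (φ.f i ≫ κ) (by rw [← φ.comm_assoc, hκ, comp_zero]) := by
  unfold hh
  rw [HomologicalComplex.homologyι_naturality_assoc]
  refine congrArg (fun z => _ ≫ z) ?_
  rw [← cancel_epi (HomologicalComplex.pOpcycles _ _), HomologicalComplex.p_opcyclesMap_assoc,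
    HomologicalComplex.p_descOpcycles, HomologicalComplex.p_descOpcycles]

lemma hh_zero (i : ℕ) (K : ChainComplex D ℕ) {I : D} [Injective I] (κ : K.X i ⟶ I)
    (hκ : K.d (i+1) i ≫ κ = 0) (h : hh i K κ hκ = 0) :
    ∃ j, ∃ w : K.X j ⟶ I, κ = K.d i j ≫ w := by
  unfold hh at h
  let j := (ComplexShape.down ℕ).next i
  let S := ShortComplex.mk (K.homologyι i) (K.fromOpcycles i j) (by simp)
  have hS : S.Exact := ShortComplex.exact_of_f_is_kernel _ (K.homologyIsKernel i j rfl)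
  let w := hS.descToInjective _ h
  have hw : S.g ≫ w = _ := hS.comp_descToInjective _ h
  refine ⟨j, w, ?_⟩
  have := congrArg (fun z => K.pOpcycles i ≫ z) hw
  simp only [S, HomologicalComplex.p_fromOpcycles_assoc,
    HomologicalComplex.p_descOpcycles] at this
  exact this.symm

variable (F : C ⥤ D) [F.Additive] {X : C} (P : ProjectiveResolution X) (i : ℕ)

noncomputable def gxi {I : D} (κ : F.obj (P.complex.X i) ⟶ I)
    (hκ : F.map (P.complex.d (i+1) i) ≫ κ = 0) : (F.leftDerived i).obj X ⟶ I :=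
  (P.isoLeftDerivedObj F i).hom ≫ hh i ((F.mapHomologicalComplex _).obj P.complex) κ hκ

lemma gxi_post {I J : D} (κ : F.obj (P.complex.X i) ⟶ I)
    (hκ : F.map (P.complex.d (i+1) i) ≫ κ = 0) (w : I ⟶ J) :
    gxi F P i (κ ≫ w) (by rw [reassoc_of% hκ, zero_comp]) = gxi F P i κ hκ ≫ w := by
  have := hh_post i ((F.mapHomologicalComplex _).obj P.complex) κ hκ w
  exact (congrArg (fun z => (P.isoLeftDerivedObj F i).hom ≫ z) this).trans
    (Category.assoc _ _ _).symm

lemma gxi_map {X' : C} (P' : ProjectiveResolution X') (g : X' ⟶ X)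
    (φ : P'.complex ⟶ P.complex) (comm : φ.f 0 ≫ P.π.f 0 = P'.π.f 0 ≫ g)
    {I : D} (κ : F.obj (P.complex.X i) ⟶ I)
    (hκ : F.map (P.complex.d (i+1) i) ≫ κ = 0) :
    (F.leftDerived i).map g ≫ gxi F P i κ hκ =
      gxi F P' i (F.map (φ.f i) ≫ κ)
        (by rw [← F.map_comp_assoc, ← φ.comm, F.map_comp_assoc, hκ, comp_zero]) := by
  have h1 := ProjectiveResolution.isoLeftDerivedObj_hom_naturality g P' P φ comm F i
  have h2 := hh_map i _ _ ((F.mapHomologicalComplex _).map φ) κ hκ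
  have h3 := congrArg (fun z => z ≫ hh i ((F.mapHomologicalComplex _).obj P.complex) κ hκ) h1
  exact (Category.assoc _ _ _).symm.trans (h3.trans ((Category.assoc _ _ _).trans
    (congrArg (fun z => (P'.isoLeftDerivedObj F i).hom ≫ z) h2)))

lemma gxi_zero {I : D} [Injective I] (κ : F.obj (P.complex.X i) ⟶ I)
    (hκ : F.map (P.complex.d (i+1) i) ≫ κ = 0) (h : gxi F P i κ hκ = 0) :
    ∃ j, ∃ w : F.obj (P.complex.X j) ⟶ I, κ = F.map (P.complex.d i j) ≫ w := by
  refine hh_zero i ((F.mapHomologicalComplex _).obj P.complex) κ hκ ?_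
  have := congrArg (fun z => (P.isoLeftDerivedObj F i).inv ≫ z) h
  exact ((Iso.inv_hom_id_assoc (P.isoLeftDerivedObj F i) _).symm.trans this).trans comp_zero

end generic
section
variable {R : Type u} [CommRing R]

noncomputable abbrev FY (Y : ModuleCat.{u} R) : ModuleCat.{u} R ⥤ (ModuleCat.{u} R)ᵒᵖ :=
  ((linearYoneda R (ModuleCat.{u} R)).obj Y).rightOp

noncomputable def kk {X Y : ModuleCat.{u} R} (f : X ⟶ Y) :
    (FY Y).obj X ⟶ op (ModuleCat.of R R) :=
  Quiver.Hom.op (X := ModuleCat.of R R) (Y := ModuleCat.of R (X ⟶ Y))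
    (ModuleCat.ofHom (LinearMap.toSpanSingleton R (X ⟶ Y) f))

lemma map_kk {X X' Y : ModuleCat.{u} R} (g : X' ⟶ X) (f : X ⟶ Y) :
    (FY Y).map g ≫ kk f = kk (g ≫ f) := by
  apply Quiver.Hom.unop_inj
  refine ModuleCat.hom_ext (LinearMap.ext_ring ?_)
  change g ≫ ((1 : R) • f) = (1 : R) • (g ≫ f)
  simp

lemma kk_zero {X Y : ModuleCat.{u} R} : kk (0 : X ⟶ Y) = 0 := by
  apply Quiver.Hom.unop_inj
  refine ModuleCat.hom_ext (LinearMap.ext_ring ?_)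
  change (1 : R) • (0 : X ⟶ Y) = 0
  simp

lemma kk_inj {X Y : ModuleCat.{u} R} {f g : X ⟶ Y} (h : kk f = kk g) : f = g := by
  have := congrArg (fun z : (FY Y).obj X ⟶ op (ModuleCat.of R R) => (Quiver.Hom.unop z).hom (1 : R)) h
  change (1 : R) • f = (1 : R) • g at this
  simpa using this

lemma kk_surj {X Y : ModuleCat.{u} R} (z : (FY Y).obj X ⟶ op (ModuleCat.of R R)) :
    ∃ f : X ⟶ Y, z = kk f := by
  refine ⟨(Quiver.Hom.unop z).hom (1 : R), ?_⟩
  apply Quiver.Hom.unop_inj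
  refine ModuleCat.hom_ext (LinearMap.ext_ring ?_)
  exact (one_smul R (((Quiver.Hom.unop z).hom (1 : R)) : X ⟶ Y)).symm

lemma kk_smul {X Y : ModuleCat.{u} R} (a : R) (f : X ⟶ Y) :
    kk (a • f) = kk f ≫ Quiver.Hom.op (a • 𝟙 (ModuleCat.of R R)) := by
  apply Quiver.Hom.unop_inj
  refine ModuleCat.hom_ext (LinearMap.ext_ring ?_)
  change (1 : R) • (a • f) = (a • (1:R)) • f
  simp

variable {X Y : ModuleCat.{u} R} (P : ProjectiveResolution X) (i : ℕ)

lemma kk_cocycle (f : P.complex.X i ⟶ Y) (hf : P.complex.d (i+1) i ≫ f = 0) :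
    (FY Y).map (P.complex.d (i+1) i) ≫ kk f = 0 := by
  rw [map_kk, hf, kk_zero]

noncomputable def xi (f : P.complex.X i ⟶ Y) (hf : P.complex.d (i+1) i ≫ f = 0) :
    ((FY Y).leftDerived i).obj X ⟶ op (ModuleCat.of R R) :=
  gxi (FY Y) P i (kk f) (kk_cocycle P i f hf)

lemma xi_congr {f f' : P.complex.X i ⟶ Y} (hf : P.complex.d (i+1) i ≫ f = 0) (h : f = f') :
    xi P i f hf = xi P i f' (h ▸ hf) := by subst h; rfl

lemma gxi_congr {κ κ' : (FY Y).obj (P.complex.X i) ⟶ op (ModuleCat.of R R)}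
    (hf : (FY Y).map (P.complex.d (i+1) i) ≫ κ = 0) (h : κ = κ') :
    gxi (FY Y) P i κ hf = gxi (FY Y) P i κ' (h ▸ hf) := by subst h; rfl

lemma xi_smul (a : R) (f : P.complex.X i ⟶ Y) (hf : P.complex.d (i+1) i ≫ f = 0) :
    xi P i (a • f) (by simp [hf]) =
      xi P i f hf ≫ Quiver.Hom.op (a • 𝟙 (ModuleCat.of R R)) :=
  (gxi_congr P i _ (kk_smul a f)).trans (gxi_post (FY Y) P i (kk f) (kk_cocycle P i f hf) _)

lemma xi_map {X' : ModuleCat.{u} R} (P' : ProjectiveResolution X') (g : X' ⟶ X)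
    (φ : P'.complex ⟶ P.complex) (comm : φ.f 0 ≫ P.π.f 0 = P'.π.f 0 ≫ g)
    (f : P.complex.X i ⟶ Y) (hf : P.complex.d (i+1) i ≫ f = 0) :
    ((FY Y).leftDerived i).map g ≫ xi P i f hf =
      xi P' i (φ.f i ≫ f) (by rw [← φ.comm_assoc, hf, comp_zero]) :=
  (gxi_map (FY Y) P i P' g φ comm (kk f) (kk_cocycle P i f hf)).trans
    (gxi_congr P' i _ (map_kk _ _))

lemma xi_zero (f : P.complex.X i ⟶ Y) (hf : P.complex.d (i+1) i ≫ f = 0)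
    (h : xi P i f hf = 0) : ∃ j, ∃ e : P.complex.X j ⟶ Y, f = P.complex.d i j ≫ e := by
  obtain ⟨j, w, hw⟩ := gxi_zero (FY Y) P i (kk f) (kk_cocycle P i f hf) h
  obtain ⟨e, rfl⟩ := kk_surj w
  exact ⟨j, e, kk_inj (hw.trans (map_kk _ _))⟩

/-- the class of a cocycle in Ext -/
noncomputable def cls (f : P.complex.X i ⟶ Y) (hf : P.complex.d (i+1) i ≫ f = 0) :
    ((Ext R (ModuleCat.{u} R) i).obj (op X)).obj Y :=
  ((xi P i f hf).unop).hom (1 : R)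

lemma cls_smul (a : R) (f : P.complex.X i ⟶ Y) (hf : P.complex.d (i+1) i ≫ f = 0) :
    cls P i (a • f) (by simp [hf]) = a • cls P i f hf := by
  unfold cls
  rw [xi_smul P i a f hf]
  change (xi P i f hf).unop.hom (a • (1:R)) = _
  exact LinearMap.map_smul _ _ _

lemma cls_map {X' : ModuleCat.{u} R} (P' : ProjectiveResolution X') (g : X' ⟶ X)
    (φ : P'.complex ⟶ P.complex) (comm : φ.f 0 ≫ P.π.f 0 = P'.π.f 0 ≫ g)
    (f : P.complex.X i ⟶ Y) (hf : P.complex.d (i+1) i ≫ f = 0) :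
    (((Ext R (ModuleCat.{u} R) i).map g.op).app Y).hom (cls P i f hf) =
      cls P' i (φ.f i ≫ f) (by rw [← φ.comm_assoc, hf, comp_zero]) := by
  unfold cls
  rw [← xi_map P i P' g φ comm f hf]
  rfl

lemma cls_zero (f : P.complex.X i ⟶ Y) (hf : P.complex.d (i+1) i ≫ f = 0)
    (h : cls P i f hf = 0) : ∃ j, ∃ e : P.complex.X j ⟶ Y, f = P.complex.d i j ≫ e := by
  refine xi_zero P i f hf ?_
  apply Quiver.Hom.unop_inj
  exact ModuleCat.hom_ext (LinearMap.ext_ring h)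

/-- projection `R/I → R/J` -/
noncomputable def proj {I J : Ideal R} (h : I ≤ J) :
    ModuleCat.of R (R ⧸ I) ⟶ ModuleCat.of R (R ⧸ J) :=
  ModuleCat.ofHom <| Submodule.mapQ _ _ LinearMap.id h

noncomputable def PR (J : Ideal R) : ProjectiveResolution (ModuleCat.of R (R ⧸ J)) :=
  projectiveResolution _

noncomputable def π0 (J : Ideal R) : (PR J).complex.X 0 ⟶ ModuleCat.of R (R ⧸ J) :=
  (PR J).π.f 0

def KK (m : Ideal R) (a : R) (i : ℕ) (Y : ModuleCat.{u} R) : Prop :=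
  ∀ (s : ℕ) (f : (PR (m ^ s)).complex.X i ⟶ Y), (PR (m ^ s)).complex.d (i+1) i ≫ f = 0 →
    ∃ (s' : ℕ) (hs : s ≤ s') (φ : (PR (m ^ s')).complex ⟶ (PR (m ^ s)).complex),
      φ.f 0 ≫ π0 (m ^ s) = π0 (m ^ s') ≫ proj (Ideal.pow_le_pow_right hs) ∧
      ∃ (j : ℕ) (e : (PR (m ^ s')).complex.X j ⟶ Y),
        a • (φ.f i ≫ f) = (PR (m ^ s')).complex.d i j ≫ e

lemma KK_of_lc (m : Ideal R) (a : R) (i : ℕ) (Y : ModuleCat.{u} R)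
    (h : ∀ z : (localCohomology m i).obj Y, a • z = 0) : KK m a i Y := by
  intro s f hf
  let F := localCohomology.diagram (localCohomology.idealPowersDiagram m) i
  let G := F ⋙ (evaluation _ _).obj Y
  have key : ∀ (z : G.obj (op (op s))), colimit.ι G (op (op s)) (a • z) = 0 := by
    intro z
    have hi : (colimit.ι F (op (op s))).app Y ≫ (colimitObjIsoColimitCompEvaluation F Y).hom
        = colimit.ι G (op (op s)) := colimitObjIsoColimitCompEvaluation_ι_app_hom F _ Y
    rw [← hi]
    have h2 : a • ((colimit.ι F (op (op s))).app Y).hom z = 0 := h _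
    rw [ModuleCat.comp_apply]
    erw [map_smul, h2]
    exact map_zero _
  have : PreservesFilteredColimitsOfSize.{0, 0} (forget (ModuleCat.{u} R)) :=
    preservesFilteredColimitsOfSize_shrink.{0, u, 0, u} _
  obtain ⟨j', g, hg⟩ := Concrete.colimit_rep_eq_zero R G (op (op s)) (a • cls (PR (m ^ s)) i f hf)
    (key _)
  let s' : ℕ := j'.unop.unop
  have hs : s ≤ s' := leOfHom g.unop.unop
  let φ := ProjectiveResolution.lift (proj (Ideal.pow_le_pow_right hs)) (PR (m ^ s')) (PR (m ^ s))
  have hφ : φ.f 0 ≫ (PR (m ^ s)).π.f 0 =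
      (PR (m ^ s')).π.f 0 ≫ proj (Ideal.pow_le_pow_right hs) :=
    ProjectiveResolution.lift_commutes_zero _ _ _
  refine ⟨s', hs, φ, hφ, ?_⟩
  have hf' : (PR (m ^ s')).complex.d (i+1) i ≫ φ.f i ≫ f = 0 := by
    rw [← φ.comm_assoc, hf, comp_zero]
  refine cls_zero (PR (m ^ s')) i (a • (φ.f i ≫ f)) (by simp [hf']) ?_
  rw [cls_smul (PR (m ^ s')) i a _ hf', ← cls_map _ i _ _ φ hφ f hf, ← LinearMap.map_smul]
  exact hg


lemma KK_of_ann (m : Ideal R) (a : R) (i : ℕ) (Y : ModuleCat.{u} R)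
    (h : ∀ z : Y, a • z = 0) : KK m a i Y := by
  intro s f hf
  refine ⟨s, le_rfl, 𝟙 _, ?_, 0, 0, ?_⟩
  · have : proj (Ideal.pow_le_pow_right (le_refl s) : m ^ s ≤ m ^ s) = 𝟙 _ := by
      refine ModuleCat.hom_ext (LinearMap.ext fun x => ?_)
      obtain ⟨x, rfl⟩ := Submodule.Quotient.mk_surjective _ x
      rfl
    rw [this, Category.comp_id]
    exact Category.id_comp _
  · rw [comp_zero]
    refine ModuleCat.hom_ext (LinearMap.ext fun x => ?_)
    exact h _

lemma proj_comp {I J K : Ideal R} (h : I ≤ J) (h' : J ≤ K) :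
    proj h ≫ proj h' = proj (h.trans h') := by
  refine ModuleCat.hom_ext (LinearMap.ext fun x => ?_)
  obtain ⟨x, rfl⟩ := Submodule.Quotient.mk_surjective _ x
  rfl

lemma KK_E2 (m : Ideal R) (a b : R) (i : ℕ) (S : ShortComplex (ModuleCat.{u} R))
    (hS : S.ShortExact) (hB : KK m a i S.X₂) (hA : KK m b (i+1) S.X₁) :
    KK m (a * b) i S.X₃ := by
  intro s f hf
  have := hS.mono_f
  have := hS.epi_g
  let g := Projective.factorThru f S.g
  have hg : g ≫ S.g = f := Projective.factorThru_comp f S.g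
  let c := hS.exact.lift ((PR (m ^ s)).complex.d (i+1) i ≫ g) (by rw [Category.assoc, hg, hf])
  have hc : c ≫ S.f = (PR (m ^ s)).complex.d (i+1) i ≫ g := hS.exact.lift_f _ _
  obtain ⟨s', hs', φ, hφ, j, h0, hh0⟩ := hA s c (by
    rw [← cancel_mono S.f, Category.assoc, hc]; simp)
  obtain ⟨h, hh⟩ : ∃ h : (PR (m ^ s')).complex.X i ⟶ S.X₁,
      b • (φ.f (i+1) ≫ c) = (PR (m ^ s')).complex.d (i+1) i ≫ h := by
    by_cases hj : j = i
    · subst hj; exact ⟨h0, hh0⟩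
    · refine ⟨0, ?_⟩
      rw [hh0, HomologicalComplex.shape, zero_comp, comp_zero]
      simp only [ComplexShape.down_Rel]
      omega
  let w : (PR (m ^ s')).complex.X i ⟶ S.X₂ := b • (φ.f i ≫ g) - h ≫ S.f
  have hw : (PR (m ^ s')).complex.d (i+1) i ≫ w = 0 := by
    simp only [w, Preadditive.comp_sub, Linear.comp_smul]
    rw [← Category.assoc _ h, ← hh, ← φ.comm_assoc, ← hc]
    simp
  obtain ⟨s'', hs'', ψ, hψ, k, e, he⟩ := hB s' w hw
  refine ⟨s'', hs'.trans hs'', ψ ≫ φ, ?_, k, e ≫ S.g, ?_⟩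
  · rw [HomologicalComplex.comp_f, Category.assoc, hφ, reassoc_of% hψ, proj_comp]
  · rw [← Category.assoc, ← he, ← hg]
    simp [w, smul_smul]

lemma KK_E0 (m : Ideal R) (a : R) (Y : ModuleCat.{u} R) (h : KK m a 0 Y) (z : Y) (s : ℕ)
    (hz : ∀ b ∈ m ^ s, b • z = 0) : a • z = 0 := by
  let q : ∀ s' (_ : s ≤ s'), ModuleCat.of R (R ⧸ m ^ s') ⟶ Y := fun s' hs' => ModuleCat.ofHom <|
    Submodule.liftQ (m ^ s') (LinearMap.toSpanSingleton R Y z) (by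
      intro b hb
      rw [LinearMap.mem_ker, LinearMap.toSpanSingleton_apply]
      exact hz b (Ideal.pow_le_pow_right hs' hb))
  have hd : (PR (m ^ s)).complex.d 1 0 ≫ π0 (m ^ s) = 0 := (PR (m ^ s)).complex_d_comp_π_f_zero
  obtain ⟨s', hs', φ, hφ, j, e, he⟩ := h s (π0 (m ^ s) ≫ q s le_rfl) (by rw [reassoc_of% hd, zero_comp])
  have hφ' : φ.f 0 ≫ π0 (m ^ s) = π0 (m ^ s') ≫ proj (Ideal.pow_le_pow_right hs') := hφ
  rw [HomologicalComplex.shape _ _ _ (by simp), zero_comp, reassoc_of% hφ'] at he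
  have hepi : Epi (π0 (m ^ s')) := inferInstanceAs (Epi ((PR (m ^ s')).π.f 0))
  obtain ⟨x, hx⟩ := (ModuleCat.epi_iff_surjective _).mp hepi
    (Submodule.Quotient.mk (1 : R) : R ⧸ m ^ s')
  have := congrArg (fun z => z.hom x) he
  change a • (q s le_rfl).hom ((proj _).hom ((π0 (m ^ s')).hom x)) = 0 at this
  erw [hx] at this
  have h3 : (q s le_rfl).hom ((proj (Ideal.pow_le_pow_right hs')).hom
    (Submodule.Quotient.mk (1 : R) : R ⧸ m ^ s')) = (1:R) • z := rfl
  rw [h3, one_smul] at this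
  exact this

end
end GCM

namespace GCM
open CategoryTheory Limits Opposite
section
variable {R : Type u} [CommRing R]

lemma list_prod_mem_pow (m : Ideal R) (l : List R) (hl : ∀ a ∈ l, a ∈ m) :
    l.prod ∈ m ^ l.length := by
  induction l with
  | nil => simp
  | cons a l ih =>
    rw [List.prod_cons, List.length_cons, pow_succ']
    exact Ideal.mul_mem_mul (hl a (by simp)) (ih fun b hb => hl b (by simp [hb]))

lemma pow_le_of_list (m : Ideal R) (t : ℕ) (J : Ideal R)
    (h : ∀ l : List R, (∀ a ∈ l, a ∈ m) → l.length = t → l.prod ∈ J) : m ^ t ≤ J := by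
  induction t generalizing J with
  | zero =>
    have := h [] (by simp) rfl
    rw [List.prod_nil] at this
    rw [(Ideal.eq_top_iff_one J).mpr this]
    exact le_top
  | succ t ih =>
    rw [pow_succ', Ideal.mul_le]
    intro r hr s hs
    have := ih (Submodule.comap (LinearMap.mulLeft R r) J) (by
      intro l hl hlt
      have := h (r :: l) (by simpa [hr] using hl) (by simp [hlt])
      simpa using this)
    simpa using this hs

/-- products of `t` elements of `m` kill the first `n` local cohomologies -/
def KA (m : Ideal R) (t n : ℕ) (M : Type u) [AddCommGroup M] [Module R M] : Prop :=
  ∀ l : List R, (∀ a ∈ l, a ∈ m) → l.length = t → ∀ i < n, KK m l.prod i (ModuleCat.of R M)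

lemma KA_mono {m : Ideal R} {t n n' : ℕ} {M : Type u} [AddCommGroup M] [Module R M]
    (h : KA m t n M) (hn : n' ≤ n) : KA m t n' M :=
  fun l hl hlt i hi => h l hl hlt i (lt_of_lt_of_le hi hn)

lemma KA_E0 {m : Ideal R} {t n : ℕ} {M : Type u} [AddCommGroup M] [Module R M]
    (h : KA m t (n+1) M) (z : M) (s : ℕ) (hz : ∀ b ∈ m ^ s, b • z = 0) :
    ∀ a ∈ m ^ t, a • z = 0 := by
  have : m ^ t ≤ LinearMap.ker (LinearMap.toSpanSingleton R M z) := by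
    refine pow_le_of_list m t _ fun l hl hlt => ?_
    rw [LinearMap.mem_ker, LinearMap.toSpanSingleton_apply]
    exact KK_E0 m l.prod (ModuleCat.of R M) (h l hl hlt 0 (Nat.succ_pos n)) z s hz
  intro a ha
  have := this ha
  rwa [LinearMap.mem_ker, LinearMap.toSpanSingleton_apply] at this

lemma KK_E2' (m : Ideal R) (a b : R) (i : ℕ) {A B C : Type u} [AddCommGroup A] [AddCommGroup B]
    [AddCommGroup C] [Module R A] [Module R B] [Module R C] (f : A →ₗ[R] B) (g : B →ₗ[R] C)
    (hf : Function.Injective f) (hg : Function.Surjective g)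
    (hfg : LinearMap.range f = LinearMap.ker g)
    (hB : KK m a i (ModuleCat.of R B)) (hA : KK m b (i+1) (ModuleCat.of R A)) :
    KK m (a * b) i (ModuleCat.of R C) := by
  let S := ShortComplex.moduleCatMk f g (by
    ext x
    have : f x ∈ LinearMap.ker g := hfg ▸ LinearMap.mem_range_self f x
    exact this)
  have hS : S.ShortExact :=
    { exact := (ShortComplex.moduleCat_exact_iff_range_eq_ker _).mpr hfg
      mono_f := (ModuleCat.mono_iff_injective _).mpr hf
      epi_g := (ModuleCat.epi_iff_surjective _).mpr hg }
  exact KK_E2 m a b i S hS hB hA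

lemma KA_quot {m : Ideal R} {t n : ℕ} {M M' : Type u} [AddCommGroup M] [Module R M]
    [AddCommGroup M'] [Module R M'] (y : R) (π : M →ₗ[R] M') (hπ : Function.Surjective π)
    (hker : LinearMap.ker π = LinearMap.range (LinearMap.lsmul R M y))
    (hKA : KA m t (n+1) M) (htors : ∀ z : M, y • z = 0 → ∀ a ∈ m ^ t, a • z = 0) :
    KA m (3 * t) n M' := by
  intro l hl hlt i hi
  obtain ⟨l1, l2, l3, rfl, h1, h2, h3⟩ : ∃ l1 l2 l3 : List R, l = l1 ++ (l2 ++ l3) ∧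
      l1.length = t ∧ l2.length = t ∧ l3.length = t := by
    refine ⟨l.take t, (l.drop t).take t, (l.drop t).drop t, ?_, ?_, ?_, ?_⟩
    · rw [List.take_append_drop, List.take_append_drop]
    all_goals simp; omega
  rw [List.prod_append, List.prod_append]
  let μ := LinearMap.lsmul R M y
  refine KK_E2' m _ _ i (LinearMap.range μ).subtype π (Submodule.injective_subtype _) hπ ?_
    (hKA l1 (fun a ha => hl a (by simp [ha])) h1 i (by omega)) ?_
  · rw [Submodule.range_subtype, hker]
  refine KK_E2' m _ _ (i+1) (LinearMap.ker μ).subtype μ.rangeRestrict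
    (Submodule.injective_subtype _) μ.surjective_rangeRestrict ?_
    (hKA l2 (fun a ha => hl a (by simp [ha])) h2 (i+1) (by omega)) ?_
  · rw [Submodule.range_subtype, LinearMap.ker_rangeRestrict]
  refine KK_of_ann m _ _ _ ?_
  rintro ⟨z, hz⟩
  apply Subtype.ext
  refine htors z hz _ ?_
  have := list_prod_mem_pow m l3 (fun a ha => hl a (by simp [ha]))
  rwa [h3] at this

lemma finiteLength_pow [IsLocalRing R] {M : Type u} [AddCommGroup M] [Module R M]
    (h : IsFiniteLength R M) : ∃ t : ℕ, ∀ a ∈ maximalIdeal R ^ t, ∀ z : M, a • z = 0 := by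
  induction h with
  | of_subsingleton => exact ⟨0, fun a _ z => Subsingleton.elim _ _⟩
  | @of_simple_quotient M _ _ N hs hN ih =>
    obtain ⟨t, ht⟩ := ih
    refine ⟨t + 1, fun a ha z => ?_⟩
    have hm : ∀ b ∈ maximalIdeal R, ∀ w : M, b • w ∈ N := by
      intro b hb w
      have h1 : (Module.annihilator R (M ⧸ N)).IsMaximal := IsSimpleModule.annihilator_isMaximal
      rw [← IsLocalRing.eq_maximalIdeal h1] at hb
      have := Module.mem_annihilator.mp hb (Submodule.Quotient.mk w)
      rwa [← Submodule.Quotient.mk_smul, Submodule.Quotient.mk_eq_zero] at this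
    have : maximalIdeal R ^ (t+1) ≤ LinearMap.ker (LinearMap.toSpanSingleton R M z) := by
      rw [pow_succ, Ideal.mul_le]
      intro r hr s hs
      rw [LinearMap.mem_ker, LinearMap.toSpanSingleton_apply, mul_smul]
      exact congrArg Subtype.val (ht r hr ⟨s • z, hm s hs z⟩)
    have := this ha
    rwa [LinearMap.mem_ker, LinearMap.toSpanSingleton_apply] at this

lemma exists_KA [IsLocalRing R] (d : ℕ)
    (hGCM : ∀ i : ℕ, i < d →
      IsFiniteLength R ((localCohomology (maximalIdeal R) i).obj (ModuleCat.of R R))) :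
    ∃ t, KA (maximalIdeal R) t d R := by
  choose! τ hτ using fun i hi => finiteLength_pow (hGCM i hi)
  refine ⟨∑ i ∈ Finset.range d, τ i, fun l hl hlt i hi => KK_of_lc _ _ _ _ ?_⟩
  refine hτ i hi _ (Ideal.pow_le_pow_right ?_ (list_prod_mem_pow _ l hl))
  rw [hlt]
  exact Finset.single_le_sum (f := τ) (fun _ _ => Nat.zero_le _) (Finset.mem_range.mpr hi)

end
end GCM

namespace GCM
section
variable {R : Type u} [CommRing R]

lemma dim_one [IsLocalRing R] [IsNoetherianRing R] (J : Ideal R)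
    (h : ringKrullDim (R ⧸ J) ≤ 0) : maximalIdeal R ≤ J.radical := by
  rw [ringKrullDim_quotient, Order.krullDim_nonpos_iff_forall_isMax] at h
  rw [Ideal.radical_eq_sInf, le_sInf_iff]
  rintro p ⟨hJp, hp⟩
  have hpm : p ≤ maximalIdeal R := le_maximalIdeal hp.ne_top
  let P : PrimeSpectrum.zeroLocus (R := R) J := ⟨⟨p, hp⟩, hJp⟩
  let Q : PrimeSpectrum.zeroLocus (R := R) J :=
    ⟨⟨maximalIdeal R, inferInstance⟩, fun x hx => hpm (hJp hx)⟩
  have hPQ : P ≤ Q := hpm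
  exact h P hPQ

lemma dim_one_pow [IsLocalRing R] [IsNoetherianRing R] (J : Ideal R)
    (h : maximalIdeal R ≤ J.radical) : ∃ s, maximalIdeal R ^ s ≤ J :=
  Ideal.exists_pow_le_of_le_radical_of_fg h (IsNoetherian.noetherian _)

lemma dim_two (J : Ideal R) (y : R) (r : ℕ)
    (hy : ∀ p ∈ J.minimalPrimes, y ∉ p) (h : ringKrullDim (R ⧸ J) ≤ (r + 1 : ℕ)) :
    ringKrullDim (R ⧸ (J ⊔ Ideal.span {y})) ≤ r := by
  rw [ringKrullDim_quotient] at h ⊢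
  rw [Order.krullDim]
  refine iSup_le fun l => ?_
  have hle : J ≤ l.head.1.asIdeal := le_trans le_sup_left l.head.2
  have := l.head.1.2
  obtain ⟨p, hp, hp'⟩ := Ideal.exists_minimalPrimes_le hle
  let P : PrimeSpectrum.zeroLocus (R := R) J := ⟨⟨p, hp.1.1⟩, hp.1.2⟩
  let f : PrimeSpectrum.zeroLocus (R := R) (J ⊔ Ideal.span {y} : Ideal R) →
    PrimeSpectrum.zeroLocus (R := R) J := fun q => ⟨q.1, fun x hx => q.2 (Ideal.mem_sup_left hx)⟩
  have hf : StrictMono f := fun a b hab => hab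
  have hP : P < (l.map f hf).head := by
    refine lt_of_le_of_ne hp' fun e => hy p hp ?_
    have : y ∈ l.head.1.asIdeal :=
      l.head.2 (Ideal.mem_sup_right (Ideal.mem_span_singleton_self y))
    have e2 : p = l.head.1.asIdeal := congrArg (fun q => q.1.asIdeal) e
    rw [e2]; exact this
  have h3 := (Order.LTSeries.length_le_krullDim ((l.map f hf).cons P hP)).trans h
  have h4 : l.length + 1 ≤ r + 1 := by
    have : (((l.map f hf).cons P hP).length) = l.length + 1 := by simp
    rw [this] at h3
    exact_mod_cast h3
  exact_mod_cast Nat.le_of_succ_le_succ h4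

lemma dim_three [IsLocalRing R] [IsNoetherianRing R] (J : Ideal R) (s : Finset R) (n : ℕ)
    (hs : ∀ a ∈ s, a ∈ maximalIdeal R) (hn : s.card ≤ n)
    (h : maximalIdeal R ≤ (J ⊔ Ideal.span (s : Set R)).radical) :
    ringKrullDim (R ⧸ J) ≤ n := by
  classical
  by_cases hJ : J = ⊤
  · subst hJ
    rw [ringKrullDim_eq_bot_of_subsingleton]; exact bot_le
  have := Ideal.Quotient.nontrivial_iff.mpr hJ
  have hloc : IsLocalRing (R ⧸ J) :=
    IsLocalRing.of_surjective' (Ideal.Quotient.mk J) Ideal.Quotient.mk_surjective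
  have h1 := ringKrullDim_le_ringKrullDim_quotient_add_card (s.image (Ideal.Quotient.mk J)) (by
    rw [IsLocalRing.ringJacobson_eq_maximalIdeal]
    intro a ha
    simp only [Finset.coe_image, Set.mem_image, Finset.mem_coe] at ha
    obtain ⟨b, hb, rfl⟩ := ha
    intro hu
    have hl := IsLocalHom.of_surjective (Ideal.Quotient.mk J) Ideal.Quotient.mk_surjective
    exact hs b hb (isUnit_of_map_unit _ _ hu))
  have h2 : ringKrullDim ((R ⧸ J) ⧸ Ideal.span ((s.image (Ideal.Quotient.mk J) : Finset _) : Set (R ⧸ J))) ≤ 0 := by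
    rw [ringKrullDim_quotient, Order.krullDim_nonpos_iff_forall_isMax]
    rintro ⟨P, hP⟩ ⟨Q, hQ⟩ hPQ
    have key : ∀ P : PrimeSpectrum (R ⧸ J), Ideal.span ((s.image (Ideal.Quotient.mk J) : Finset _) : Set (R ⧸ J)) ≤ P.asIdeal → maximalIdeal R ≤ P.asIdeal.comap (Ideal.Quotient.mk J) := by
      intro P hP
      have hp : (P.asIdeal.comap (Ideal.Quotient.mk J)).IsPrime := inferInstance
      refine h.trans ((Ideal.IsPrime.radical_le_iff hp).mpr (sup_le ?_ ?_))
      · intro a ha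
        rw [Ideal.mem_comap, Ideal.Quotient.eq_zero_iff_mem.mpr ha]; exact zero_mem _
      · rw [Ideal.span_le]
        intro a ha
        exact hP (Ideal.subset_span (by simpa using ⟨a, ha, rfl⟩))
    intro q hq
    obtain ⟨a, rfl⟩ := Ideal.Quotient.mk_surjective q
    refine key P hP ?_
    exact le_maximalIdeal (Ideal.IsPrime.ne_top (I := Q.asIdeal.comap (Ideal.Quotient.mk J)) inferInstance) hq
  have h3 : (s.image (Ideal.Quotient.mk J)).card ≤ n := Finset.card_image_le.trans hn
  refine h1.trans ?_
  calc _ ≤ (0 : WithBot ℕ∞) + (n : ℕ) := add_le_add h2 (by exact_mod_cast h3)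
    _ = n := zero_add _

end
end GCM

namespace GCM
section
variable {R : Type u} [CommRing R] [IsLocalRing R] [IsNoetherianRing R]

lemma tors_of_avoid {M : Type u} [AddCommGroup M] [Module R M] (y : R)
    (hy : ∀ p ∈ associatedPrimes R M, p ≠ maximalIdeal R → y ∉ p) (z : M) (hz : y • z = 0) :
    ∃ s, ∀ a ∈ maximalIdeal R ^ s, a • z = 0 := by
  let N : Submodule R M := Submodule.span R {z}
  have hrad : maximalIdeal R ≤ (Module.annihilator R N).radical := by
    rw [← Ideal.sInf_minimalPrimes, le_sInf_iff]
    intro p hp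
    have h1 := Module.associatedPrimes.minimalPrimes_annihilator_subset_associatedPrimes R N hp
    have h2 : p ∈ associatedPrimes R M :=
      associatedPrimes.subset_of_injective N.injective_subtype h1
    by_contra hne
    refine hy p h2 (fun e => hne e.ge) (hp.1.2 ?_)
    rw [Submodule.mem_annihilator_span_singleton]
    exact hz
  obtain ⟨s, hs⟩ := dim_one_pow _ hrad
  refine ⟨s, fun a ha => ?_⟩
  have := hs ha
  rwa [Submodule.mem_annihilator_span_singleton] at this

lemma exists_avoid (S : Set (Ideal R)) (hS : S.Finite) (hp : ∀ p ∈ S, p.IsPrime) :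
    ∃ y ∈ maximalIdeal R, ∀ p ∈ S, p ≠ maximalIdeal R → y ∉ p := by
  classical
  let s : Finset (Ideal R) := hS.toFinset.filter (· ≠ maximalIdeal R)
  by_contra hcon
  push Not at hcon
  have : ((maximalIdeal R : Ideal R) : Set R) ⊆ ⋃ i ∈ (↑s : Set (Ideal R)), (id i : Ideal R) := by
    intro y hy
    obtain ⟨p, hpS, hpm, hyp⟩ := hcon y hy
    simp only [Set.mem_iUnion]
    exact ⟨p, by simp [s, hpS, hpm], hyp⟩
  rw [Ideal.subset_union_prime ⊥ ⊥ (by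
    intro i hi _ _
    simp [s] at hi
    exact hp i hi.1)] at this
  obtain ⟨p, hps, hmp⟩ := this
  simp [s] at hps
  exact hps.2 (le_antisymm (le_maximalIdeal (hp p hps.1).ne_top) hmp)

lemma lemD (r : ℕ) : ∀ (t : ℕ) (M : Type u) [AddCommGroup M] [Module R M] [Module.Finite R M],
    KA (maximalIdeal R) t (r+1) M → ∀ (z : M) (J : Ideal R), (∀ b ∈ J, b • z = 0) →
    ringKrullDim (R ⧸ J) ≤ r → ∀ a ∈ maximalIdeal R ^ t, a • z = 0 := by
  induction r with
  | zero =>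
    intro t M _ _ _ hKA z J hJ hdim
    obtain ⟨s, hs⟩ := dim_one_pow J (dim_one J (by simpa using hdim))
    exact KA_E0 hKA z s fun b hb => hJ b (hs hb)
  | succ r ih =>
    intro t M _ _ _ hKA z J hJ hdim
    by_cases hJm : maximalIdeal R ≤ J.radical
    · obtain ⟨s, hs⟩ := dim_one_pow J hJm
      exact KA_E0 hKA z s fun b hb => hJ b (hs hb)
    obtain ⟨y, hym, hy⟩ := exists_avoid (associatedPrimes R M ∪ J.minimalPrimes)
      ((associatedPrimes.finite R M).union (Ideal.finite_minimalPrimes_of_isNoetherianRing R J)) (by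
        rintro p (hp | hp)
        · exact hp.isPrime
        · exact hp.1.1)
    have hmin : ∀ k : ℕ, ∀ p ∈ J.minimalPrimes, y ^ (k+1) ∉ p := by
      intro k p hp hyk
      have hpp := hp.1.1
      refine hy p (Or.inr hp) ?_ (hpp.mem_of_pow_mem _ hyk)
      rintro rfl
      refine hJm ?_
      rw [Ideal.radical_eq_sInf, le_sInf_iff]
      rintro q ⟨hJq, hq⟩
      exact hp.2 ⟨hq, hJq⟩ (le_maximalIdeal hq.ne_top)
    have key : ∀ a ∈ maximalIdeal R ^ (3 * t), a • z = 0 := by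
      intro a ha
      rw [← Submodule.mem_bot R,
        ← Ideal.iInf_pow_smul_eq_bot_of_isLocalRing (M := M) (maximalIdeal R)
          (Ideal.IsPrime.ne_top inferInstance), Submodule.mem_iInf]
      intro k
      let N := LinearMap.range (LinearMap.lsmul R M (y ^ (k+1)))
      have hK : KA (maximalIdeal R) (3 * t) (r+1) (M ⧸ N) := by
        refine KA_quot (y ^ (k+1)) N.mkQ N.mkQ_surjective N.ker_mkQ hKA ?_
        intro w hw
        obtain ⟨s, hs⟩ := tors_of_avoid (y ^ (k+1)) (fun p hp hpm hyp => by
          have := hp.isPrime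
          exact hy p (Or.inl hp) hpm (this.mem_of_pow_mem _ hyp)) w hw
        exact KA_E0 hKA w s hs
      have h1 := ih (3 * t) (M ⧸ N) hK (N.mkQ z) (J ⊔ Ideal.span {y ^ (k+1)}) ?_
        (dim_two J _ r (hmin k) hdim) a ha
      · rw [← map_smul, Submodule.mkQ_apply, Submodule.Quotient.mk_eq_zero] at h1
        obtain ⟨w, hw⟩ := h1
        rw [← hw, LinearMap.lsmul_apply]
        exact Submodule.smul_mem_smul
          (Ideal.pow_le_pow_right (Nat.le_succ k) (Ideal.pow_mem_pow hym (k+1))) trivial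
      · intro b hb
        obtain ⟨c, hc, e, he, rfl⟩ := Submodule.mem_sup.mp hb
        obtain ⟨e, rfl⟩ := Ideal.mem_span_singleton'.mp he
        rw [← map_smul, Submodule.mkQ_apply, Submodule.Quotient.mk_eq_zero, add_smul, hJ c hc,
          zero_add]
        exact ⟨e • z, by rw [LinearMap.lsmul_apply, smul_smul, mul_comm]⟩
    exact KA_E0 hKA z _ key

end
end GCM

namespace GCM
section
variable {R : Type u} [CommRing R] [IsLocalRing R] [IsNoetherianRing R]

/-- the initial ideals of a sequence -/
def II {d : ℕ} (y : Fin d → R) (i : ℕ) : Ideal R := Ideal.span (y '' {j : Fin d | (j : ℕ) < i})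

lemma II_dim {d : ℕ} (y : Fin d → R) (hm : ∀ j, y j ∈ maximalIdeal R)
    (hrad : maximalIdeal R ≤ (Ideal.span (Set.range y)).radical) (i : ℕ) (hi : i < d) (k : Fin d)
    (hk : i ≤ k) (e : ℕ) :
    ringKrullDim (R ⧸ (II y i ⊔ Ideal.span {y k ^ e})) ≤ (d - i - 1 : ℕ) := by
  classical
  refine dim_three _ (((Finset.Ici (⟨i, hi⟩ : Fin d)).erase k).image y) _ ?_ ?_ ?_
  · intro a ha
    obtain ⟨j, _, rfl⟩ := Finset.mem_image.mp ha
    exact hm j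
  · refine Finset.card_image_le.trans ?_
    rw [Finset.card_erase_of_mem (Finset.mem_Ici.mpr (show (⟨i, hi⟩ : Fin d) ≤ k from hk)), Fin.card_Ici]
  · refine hrad.trans ?_
    rw [Ideal.radical_le_radical_iff, Ideal.span_le]
    rintro _ ⟨j, rfl⟩
    by_cases hji : (j : ℕ) < i
    · exact Ideal.le_radical (Ideal.mem_sup_left (Ideal.mem_sup_left
        (Ideal.subset_span ⟨j, hji, rfl⟩)))
    by_cases hjk : j = k
    · subst hjk
      exact ⟨e, Ideal.mem_sup_left (Ideal.mem_sup_right (Ideal.mem_span_singleton_self _))⟩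
    · refine Ideal.le_radical (Ideal.mem_sup_right (Ideal.subset_span ?_))
      simp only [Finset.coe_image, Set.mem_image, Finset.mem_coe]
      refine ⟨j, ?_, rfl⟩
      rw [Finset.mem_erase, Finset.mem_Ici]
      exact ⟨hjk, Nat.le_of_not_lt hji⟩

lemma II_tors {d : ℕ} (y : Fin d → R) (hm : ∀ j, y j ∈ maximalIdeal R)
    (hrad : maximalIdeal R ≤ (Ideal.span (Set.range y)).radical) (i : ℕ) (hi : i < d) (k : Fin d)
    (hk : i ≤ k) (e t : ℕ) (hKA : KA (maximalIdeal R) t (d - i) (R ⧸ II y i)) (z : R ⧸ II y i)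
    (hz : y k ^ e • z = 0) : ∀ a ∈ maximalIdeal R ^ t, a • z = 0 := by
  have h : d - i = d - i - 1 + 1 := by omega
  rw [h] at hKA
  refine lemD (d - i - 1) t (R ⧸ II y i) hKA z (II y i ⊔ Ideal.span {y k ^ e}) ?_
    (II_dim y hm hrad i hi k hk e)
  intro b hb
  obtain ⟨c, hc, w, hw, rfl⟩ := Submodule.mem_sup.mp hb
  obtain ⟨w, rfl⟩ := Ideal.mem_span_singleton'.mp hw
  rw [add_smul, mul_smul, hz, smul_zero, add_zero]
  obtain ⟨a, rfl⟩ := Ideal.Quotient.mk_surjective z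
  rw [← Ideal.Quotient.mk_eq_mk, ← Submodule.Quotient.mk_smul, Submodule.Quotient.mk_eq_zero,
    smul_eq_mul]
  exact Ideal.mul_mem_right _ _ hc

lemma II_KA {d : ℕ} (y : Fin d → R) (hm : ∀ j, y j ∈ maximalIdeal R)
    (hrad : maximalIdeal R ≤ (Ideal.span (Set.range y)).radical) (t : ℕ)
    (hKA : KA (maximalIdeal R) t d R) (i : ℕ) (hi : i ≤ d) :
    KA (maximalIdeal R) (3 ^ i * t) (d - i) (R ⧸ II y i) := by
  induction i with
  | zero =>
    intro l hl hlt i hid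
    have h0 : II y 0 = ⊥ := by simp [II]
    rw [← mul_one l.prod]
    refine KK_E2' (maximalIdeal R) l.prod 1 i (0 : PUnit.{u+1} →ₗ[R] R) (Submodule.mkQ (II y 0))
      (fun _ _ _ => Subsingleton.elim _ _) (Submodule.mkQ_surjective _) ?_
      (hKA l hl (by simpa using hlt) i hid) (KK_of_ann _ _ _ _ fun z => Subsingleton.elim _ _)
    rw [Submodule.ker_mkQ, h0, LinearMap.range_zero]
  | succ i ih =>
    have hid : i < d := hi
    have hK := ih hid.le
    have h : d - i = d - (i+1) + 1 := by omega
    have hII : II y (i+1) = II y i ⊔ Ideal.span {y ⟨i, hid⟩} := by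
      rw [II, II, ← Ideal.span_union]
      congr 1
      ext a
      constructor
      · rintro ⟨j, hj, rfl⟩
        rcases Nat.lt_succ_iff_lt_or_eq.mp hj with h | h
        · exact Or.inl ⟨j, h, rfl⟩
        · refine Or.inr ?_
          have : j = ⟨i, hid⟩ := Fin.ext h
          rw [this]; rfl
      · rintro (⟨j, hj, rfl⟩ | rfl)
        · exact ⟨j, Nat.lt_succ_of_lt hj, rfl⟩
        · exact ⟨⟨i, hid⟩, Nat.lt_succ_self i, rfl⟩
    have hle : II y i ≤ II y (i+1) := hII ▸ le_sup_left
    rw [pow_succ', mul_assoc]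
    refine KA_quot (y ⟨i, hid⟩) (Submodule.factor hle) (Submodule.factor_surjective hle) ?_
      (h ▸ hK) ?_
    · ext z
      obtain ⟨a, rfl⟩ := Submodule.mkQ_surjective _ z
      rw [LinearMap.mem_ker, Submodule.factor_mk, Submodule.mkQ_apply, Submodule.mkQ_apply,
        Submodule.Quotient.mk_eq_zero, hII]
      constructor
      · intro ha
        obtain ⟨c, hc, w, hw, rfl⟩ := Submodule.mem_sup.mp ha
        obtain ⟨w, rfl⟩ := Ideal.mem_span_singleton'.mp hw
        refine ⟨Submodule.Quotient.mk w, ?_⟩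
        rw [LinearMap.lsmul_apply, ← Submodule.Quotient.mk_smul, Submodule.Quotient.eq, smul_eq_mul,
          mul_comm, sub_add_cancel_right]
        exact neg_mem hc
      · rintro ⟨w, hw⟩
        obtain ⟨w, rfl⟩ := Submodule.mkQ_surjective _ w
        rw [LinearMap.lsmul_apply, Submodule.mkQ_apply, ← Submodule.Quotient.mk_smul,
          Submodule.Quotient.eq, smul_eq_mul] at hw
        have : a = -(y ⟨i, hid⟩ * w - a) + y ⟨i, hid⟩ * w := by ring
        rw [this]
        exact add_mem (neg_mem (Ideal.mem_sup_left hw)) (Ideal.mem_sup_right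
          (Ideal.mul_mem_right _ _ (Ideal.mem_span_singleton_self _)))
    · intro z hz
      exact II_tors y hm hrad i hid ⟨i, hid⟩ le_rfl 1 _ hK z (by rwa [pow_one])

lemma core {d : ℕ} (y : Fin d → R) (hm : ∀ j, y j ∈ maximalIdeal R)
    (hrad : maximalIdeal R ≤ (Ideal.span (Set.range y)).radical) (t : ℕ)
    (hKA : KA (maximalIdeal R) t d R) (hy : ∀ j, y j ∈ maximalIdeal R ^ (3 ^ d * t)) :
    IsDSequence y := by
  intro i hi k hk
  have hK := II_KA y hm hrad t hKA i hi.le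
  change (II y i).colon _ = (II y i).colon _
  have hmem : y k ∈ maximalIdeal R ^ (3 ^ i * t) :=
    Ideal.pow_le_pow_right (Nat.mul_le_mul_right t (Nat.pow_le_pow_right (by norm_num) hi.le)) (hy k)
  ext a
  simp only [Ideal.colon_span, Submodule.mem_colon_singleton, smul_eq_mul]
  constructor
  · intro ha
    have h1 := II_tors y hm hrad i hi ⟨i, hi⟩ le_rfl 1 _ hK (Submodule.Quotient.mk (a * y k)) (by
      rw [← Submodule.Quotient.mk_smul, Submodule.Quotient.mk_eq_zero, smul_eq_mul, pow_one]
      convert ha using 1; ring) _ hmem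
    have h2 := II_tors y hm hrad i hi k hk 2 _ hK (Submodule.Quotient.mk a) (by
      rw [← Submodule.Quotient.mk_smul, Submodule.Quotient.mk_eq_zero, smul_eq_mul] at h1 ⊢
      convert h1 using 1; ring) _ hmem
    rw [← Submodule.Quotient.mk_smul, Submodule.Quotient.mk_eq_zero, smul_eq_mul, mul_comm] at h2
    exact h2
  · intro ha
    have := Ideal.mul_mem_right (y ⟨i, hi⟩) _ ha
    convert this using 1; ring

lemma core_usd {d : ℕ} (x : Fin d → R) (hrad : (Ideal.span (Set.range x)).radical = maximalIdeal R)
    (t : ℕ) (hKA : KA (maximalIdeal R) t d R) (hx : ∀ j, x j ∈ maximalIdeal R ^ (3 ^ d * t)) :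
    IsUSDSequence x := by
  intro m hm σ
  have hxm : ∀ j, x j ∈ maximalIdeal R := fun j => by
    rw [← hrad]; exact Ideal.le_radical (Ideal.subset_span ⟨j, rfl⟩)
  refine core _ (fun j => Ideal.pow_mem_of_mem _ (hxm _) _ (hm _)) ?_ t hKA
    (fun j => Ideal.pow_mem_of_mem _ (hx _) _ (hm _))
  rw [← hrad, Ideal.radical_le_radical_iff, Ideal.span_le]
  rintro _ ⟨j, rfl⟩
  exact ⟨m j, Ideal.subset_span ⟨σ.symm j, by simp⟩⟩

end
end GCM

/-- if `(R,𝔪)` is a generalized Cohen–Macaulay Noetherian local ring of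
dimension `d` (all lower local cohomologies `H_𝔪^i(R)`, `i < d`, have finite length), then
there is `t` such that every system of parameters contained in `𝔪^t` is a USD-sequence; in
particular for every sop `x_1,…,x_d` the powers `x_1^n,…,x_d^n` are a USD-sequence for all
`n ≫ 0`. -/
theorem stmt9 {R : Type u} [CommRing R] [IsLocalRing R] [IsNoetherianRing R]
    (d : ℕ) (hd : ringKrullDim R = d)
    (hGCM : ∀ i : ℕ, i < d →
      IsFiniteLength R ((localCohomology (maximalIdeal R) i).obj (ModuleCat.of R R))) :
    (∃ t : ℕ, ∀ x : Fin d → R,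
        (Ideal.span (Set.range x)).radical = maximalIdeal R →
        (∀ j, x j ∈ maximalIdeal R ^ t) → IsUSDSequence x) ∧
      ∀ x : Fin d → R, (Ideal.span (Set.range x)).radical = maximalIdeal R →
        ∃ N : ℕ, ∀ n ≥ N, IsUSDSequence (fun j => x j ^ n) := by
  obtain ⟨t, hKA⟩ := GCM.exists_KA d hGCM
  refine ⟨⟨3 ^ d * t, fun x hrad hx => GCM.core_usd x hrad t hKA hx⟩, fun x hrad => ?_⟩
  refine ⟨3 ^ d * t + 1, fun n hn => GCM.core_usd _ ?_ t hKA fun j => ?_⟩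
  · rw [← hrad]
    apply le_antisymm
    · rw [Ideal.radical_le_radical_iff, Ideal.span_le]
      rintro _ ⟨j, rfl⟩
      exact Ideal.le_radical (Ideal.pow_mem_of_mem _
        (Ideal.subset_span (Set.mem_range_self j)) _ (by omega))
    · rw [Ideal.radical_le_radical_iff, Ideal.span_le]
      rintro _ ⟨j, rfl⟩
      exact ⟨n, Ideal.subset_span ⟨j, rfl⟩⟩
  · have hxm : x j ∈ maximalIdeal R := by
      rw [← hrad]; exact Ideal.le_radical (Ideal.subset_span ⟨j, rfl⟩)
    exact Ideal.pow_le_pow_right (by omega) (Ideal.pow_mem_pow hxm n)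
end

section
/- Let (R,m) be an ℕ-graded isolated non-F-rational singularity with a homogeneous sop x_1,...,x_d forming a USD-sequence (after replacing by a power if necessary). Then the tight closure of zero in the top local cohomology satisfies (0)^*_{H_m^d(R)} = ∪_{n>0} Z_n(nδ) where Z_n = (x_1^n,...,x_d^n)^*/(x_1^n,...,x_d^n)^lim and δ = Σ_{j=1}^d deg(x_j). -/
universe u

open IsLocalRing

noncomputable section

def offMinimalPrimes (R : Type*) [CommRing R] : Set R :=
  {c : R | ∀ P ∈ minimalPrimes R, c ∉ P}

def frobeniusPower {R : Type*} [CommRing R] (I : Ideal R) (q : ℕ) : Ideal R :=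
  Ideal.span ((fun r => r ^ q) '' (I : Set R))

def tightClosure {R : Type*} [CommRing R] (p : ℕ) (I : Ideal R) : Set R :=
  {z : R | ∃ c ∈ offMinimalPrimes R, ∃ e₀ : ℕ, ∀ e ≥ e₀,
    c * z ^ p ^ e ∈ frobeniusPower I (p ^ e)}

def idealHeight {R : Type*} [CommRing R] (I : Ideal R) : ℕ∞ :=
  ⨅ (P : PrimeSpectrum R) (_ : I ≤ P.asIdeal), Order.height P

/-- A parameter ideal: generated by as many elements as its height. -/
def IsParameterIdeal {R : Type*} [CommRing R] (I : Ideal R) : Prop :=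
  ∃ (n : ℕ) (y : Fin n → R), I = Ideal.span (Set.range y) ∧ idealHeight I = (n : ℕ∞)

/-- `F`-rationality: every parameter ideal is tightly closed. -/
def IsFRational (p : ℕ) (S : Type*) [CommRing S] : Prop :=
  ∀ I : Ideal S, IsParameterIdeal I → tightClosure p I = (I : Set S)

/-- Isolated non-`F`-rational singularity: `R_P` is `F`-rational for every prime `P ≠ 𝔪`. -/
def IsIsolatedNonFRational {R : Type*} [CommRing R] (p : ℕ) (𝔪 : Ideal R) : Prop :=
  ∀ P : PrimeSpectrum R, P.asIdeal ≠ 𝔪 → IsFRational p (Localization.AtPrime P.asIdeal)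

/-- The ideal generated by the first `i` entries of `x`. -/
def firstIdeal {R : Type*} [CommRing R] {d : ℕ} (x : Fin d → R) (i : ℕ) : Ideal R :=
  Ideal.span (x '' {j : Fin d | (j : ℕ) < i})

/-- The limit closure `(x_1,…,x_i)^lim`. -/
def firstLimitClosure {R : Type*} [CommRing R] {d : ℕ} (x : Fin d → R) (i : ℕ) : Set R :=
  {z : R | ∃ s ≥ 1,
    (∏ j ∈ Finset.univ.filter (fun j : Fin d => (j : ℕ) < i), x j) ^ (s - 1) * z ∈
      Ideal.span ((fun j => x j ^ s) '' {j : Fin d | (j : ℕ) < i})}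

/-- The grading of `R` extended to `ℤ` (zero in negative degrees). -/
def gradeZ {K R : Type*} [Field K] [CommRing R] [Algebra K R]
    (𝒜 : ℕ → Submodule K R) (n : ℤ) : Submodule K R :=
  if 0 ≤ n then 𝒜 n.toNat else ⊥

/-- The degree-`m` part of the quotient `T/L` of two ideals, induced by the grading of `R`. -/
def quotientGradedPiece {K R : Type*} [Field K] [CommRing R] [Algebra K R]
    (𝒜 : ℕ → Submodule K R) (T L : Ideal R) (m : ℤ) :
    AddSubgroup (T ⧸ Submodule.comap T.subtype L) :=
  AddSubgroup.map (Submodule.mkQ (Submodule.comap T.subtype L)).toAddMonoidHom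
    (AddSubgroup.comap T.subtype.toAddMonoidHom (gradeZ 𝒜 m).toAddSubgroup)

end

/-- The ideal `(x_1^n,…,x_d^n)`. -/
def powersIdeal {R : Type*} [CommRing R] {d : ℕ} (x : Fin d → R) (n : ℕ) : Ideal R :=
  Ideal.span (Set.range fun j => x j ^ n)

theorem frob_le_powers {R : Type*} [CommRing R] (p : ℕ) [Fact p.Prime] [CharP R p] {d : ℕ}
    (x : Fin d → R) (n e : ℕ) :
    frobeniusPower (powersIdeal x n) (p ^ e) ≤ powersIdeal x (n * p ^ e) := by
  haveI : ExpChar R p := ExpChar.prime Fact.out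
  unfold frobeniusPower
  rw [Ideal.span_le]
  rintro _ ⟨r, hr, rfl⟩
  have h : powersIdeal x n ≤ (powersIdeal x (n * p ^ e)).comap (iterateFrobenius R p e) := by
    unfold powersIdeal
    rw [Ideal.span_le]
    rintro _ ⟨j, rfl⟩
    simp only [SetLike.mem_coe, Ideal.mem_comap, iterateFrobenius_def, ← pow_mul]
    exact Ideal.subset_span ⟨j, rfl⟩
  have := h hr
  simpa [Ideal.mem_comap, iterateFrobenius_def] using this

theorem powers_le_frob {R : Type*} [CommRing R] {d : ℕ} (x : Fin d → R) (n q : ℕ) :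
    powersIdeal x (n * q) ≤ frobeniusPower (powersIdeal x n) q := by
  unfold powersIdeal frobeniusPower
  rw [Ideal.span_le]
  rintro _ ⟨j, rfl⟩
  refine Ideal.subset_span ⟨x j ^ n, Ideal.subset_span ⟨j, rfl⟩, ?_⟩
  simp [pow_mul]

theorem exists_complement {R : Type*} [CommRing R] [IsNoetherianRing R] [IsReduced R] (y : R) :
    ∃ w : R, w * y = 0 ∧ y + w ∈ offMinimalPrimes R := by
  classical
  have hfin := minimalPrimes.finite_of_isNoetherianRing R
  set A : Finset (Ideal R) := hfin.toFinset.filter (fun P => y ∈ P) with hA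
  set B : Finset (Ideal R) := hfin.toFinset.filter (fun P => y ∉ P) with hB
  have key : ¬ (((B.inf id : Ideal R) : Set R) ⊆ ⋃ P ∈ (A : Set (Ideal R)), (P : Set R)) := by
    intro h
    rw [Ideal.subset_union_prime (f := fun P : Ideal R => P) ⊥ ⊥
      (fun P hP _ _ => (Set.Finite.mem_toFinset _ |>.1 (Finset.mem_filter.1 hP).1).1.1)] at h
    obtain ⟨P, hP, hle⟩ := h
    have hP' := Finset.mem_filter.1 hP
    have hPm := hfin.mem_toFinset.1 hP'.1
    haveI : P.IsPrime := hPm.1.1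
    rw [Ideal.IsPrime.inf_le' this] at hle
    obtain ⟨Q, hQ, hQP⟩ := hle
    have hQ' := Finset.mem_filter.1 hQ
    have hQm := hfin.mem_toFinset.1 hQ'.1
    exact hQ'.2 (hPm.2 hQm.1 hQP hP'.2)
  obtain ⟨w, hwB, hwA⟩ := Set.not_subset.1 key
  have hB' : ∀ P ∈ minimalPrimes R, y ∉ P → w ∈ P := by
    intro P hP hy
    exact (Finset.inf_le (f := id) (Finset.mem_filter.2 ⟨hfin.mem_toFinset.2 hP, hy⟩) : B.inf id ≤ P) hwB
  have hA' : ∀ P ∈ minimalPrimes R, y ∈ P → w ∉ P := by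
    intro P hP hy hw
    apply hwA
    simp only [Set.mem_iUnion]
    exact ⟨P, Finset.mem_coe.2 (Finset.mem_filter.2 ⟨hfin.mem_toFinset.2 hP, hy⟩), hw⟩
  refine ⟨w, ?_, ?_⟩
  · have : w * y ∈ nilradical R := by
      rw [nilradical, ← Ideal.sInf_minimalPrimes, Ideal.mem_sInf]
      intro P hP
      by_cases hy : y ∈ P
      · exact P.mul_mem_left _ hy
      · exact P.mul_mem_right _ (hB' P hP hy)
    exact (mem_nilradical.1 this).eq_zero
  · intro P hP h
    by_cases hy : y ∈ P
    · exact hA' P hP hy ((P.add_mem_iff_right hy).1 h)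
    · exact hy ((P.add_mem_iff_left (hB' P hP hy)).1 h)

theorem usd_colon {R : Type u} [CommRing R] {d : ℕ} (x : Fin d → R) (husd : IsUSDSequence x)
    (m : Fin d → ℕ) (hm : ∀ j, 1 ≤ m j) (i : Fin d) (b : ℕ) (w : R)
    (h : x i ^ b * w ∈ Ideal.span ((fun j => x j ^ m j) '' {j | j ≠ i})) :
    x i * w ∈ Ideal.span ((fun j => x j ^ m j) '' {j | j ≠ i}) := by
  classical
  have hd : d - 1 < d := by have := i.2; omega
  have hs := husd (Function.update m i 1)
    (by intro j; by_cases hj : j = i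
        · subst hj; simp
        · simp [hj, hm j])
    (Equiv.swap i ⟨d - 1, hd⟩) (d - 1) hd ⟨d - 1, hd⟩ le_rfl
  have himg : ((fun j => x (Equiv.swap i ⟨d - 1, hd⟩ j) ^
      (Function.update m i 1) (Equiv.swap i ⟨d - 1, hd⟩ j)) '' {j : Fin d | (j : ℕ) < d - 1})
      = ((fun j => x j ^ m j) '' {j | j ≠ i}) := by
    ext r
    constructor
    · rintro ⟨j, hj, rfl⟩
      have hne : Equiv.swap i ⟨d - 1, hd⟩ j ≠ i := by
        intro hh
        have : j = ⟨d - 1, hd⟩ := by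
          apply (Equiv.swap i (⟨d - 1, hd⟩ : Fin d)).injective
          rw [hh, Equiv.swap_apply_right]
        subst this
        simp at hj
      exact ⟨_, hne, by simp [Function.update_of_ne hne]⟩
    · rintro ⟨j, hj, rfl⟩
      refine ⟨Equiv.swap i ⟨d - 1, hd⟩ j, ?_, ?_⟩
      · have : Equiv.swap i ⟨d - 1, hd⟩ j ≠ ⟨d - 1, hd⟩ := by
          intro hh
          apply hj
          apply (Equiv.swap i (⟨d - 1, hd⟩ : Fin d)).injective
          rw [hh, Equiv.swap_apply_left]
        have h2 : ((Equiv.swap i ⟨d - 1, hd⟩ j : Fin d) : ℕ) ≠ d - 1 := fun hh => this (Fin.ext hh)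
        have h3 := (Equiv.swap i ⟨d - 1, hd⟩ j : Fin d).2
        simp only [Set.mem_ofPred_eq]
        omega
      · have hj' : j ≠ i := hj
        simp [Function.update_of_ne hj']
  rw [himg] at hs
  simp only [Equiv.swap_apply_right, Function.update_self, pow_one] at hs
  generalize Ideal.span ((fun j => x j ^ m j) '' {j | j ≠ i}) = J at hs h ⊢
  have step : ∀ v, x i * x i * v ∈ J → x i * v ∈ J := by
    intro v hv
    have h1 : v ∈ J.colon (Ideal.span {x i * x i} : Ideal R) := by
      rw [Submodule.mem_colon]
      intro s hs'
      obtain ⟨a, rfl⟩ := Ideal.mem_span_singleton'.1 hs'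
      have := J.mul_mem_left a hv
      convert this using 1
      simp only [smul_eq_mul]; ring
    rw [hs, Submodule.mem_colon] at h1
    have := h1 (x i) (Ideal.mem_span_singleton_self _)
    simpa [mul_comm] using this
  induction b with
  | zero => exact J.mul_mem_left _ (by simpa using h)
  | succ b ih =>
    rcases b with _ | b
    · simpa using h
    · apply ih
      have := step (x i ^ b * w) (by convert h using 1; ring)
      convert this using 1; ring

theorem usd_key {R : Type u} [CommRing R] {d : ℕ} (x : Fin d → R) (husd : IsUSDSequence x)
    (a b : ℕ) (ha : 1 ≤ a) (z : R)
    (h : (∏ j, x j) ^ b * z ∈ powersIdeal x (a + b)) :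
    (∏ j, x j) * z ∈ powersIdeal x a := by
  classical
  have main : ∀ S : Finset (Fin d),
      (∏ j, x j ^ (if j ∈ S then 1 else b)) * z ∈
        Ideal.span (Set.range fun j => x j ^ (if j ∈ S then a else a + b)) := by
    intro S
    induction S using Finset.induction_on with
    | empty => simpa [powersIdeal, Finset.prod_pow] using h
    | insert i S hi ih =>
      set J := Ideal.span ((fun j => x j ^ (if j ∈ S then a else a + b)) '' {j | j ≠ i}) with hJ
      set P := ∏ j ∈ Finset.univ.erase i, x j ^ (if j ∈ S then 1 else b) with hP
      have e1 : (∏ j, x j ^ (if j ∈ S then 1 else b)) = x i ^ b * P := by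
        rw [← Finset.mul_prod_erase _ _ (Finset.mem_univ i), if_neg hi]
      have e2 : (∏ j, x j ^ (if j ∈ insert i S then 1 else b)) = x i * P := by
        rw [← Finset.mul_prod_erase _ _ (Finset.mem_univ i), if_pos (Finset.mem_insert_self _ _),
          pow_one]
        congr 1
        refine Finset.prod_congr rfl fun j hj => ?_
        simp [Finset.ne_of_mem_erase hj]
      have i1 : Ideal.span (Set.range fun j => x j ^ (if j ∈ S then a else a + b)) ≤
          Ideal.span {x i ^ (a + b)} ⊔ J := by
        rw [Ideal.span_le]
        rintro _ ⟨j, rfl⟩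
        by_cases hj : j = i
        · subst hj
          simp only [if_neg hi]
          exact Ideal.mem_sup_left (Ideal.mem_span_singleton_self _)
        · exact Ideal.mem_sup_right (Ideal.subset_span ⟨j, hj, rfl⟩)
      have i2 : J ≤ Ideal.span (Set.range fun j => x j ^ (if j ∈ insert i S then a else a + b)) := by
        rw [hJ, Ideal.span_le]
        rintro _ ⟨j, hj, rfl⟩
        have hj' : j ≠ i := hj
        exact Ideal.subset_span ⟨j, by simp [hj']⟩
      have i3 : x i ^ a ∈
          Ideal.span (Set.range fun j => x j ^ (if j ∈ insert i S then a else a + b)) :=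
        Ideal.subset_span ⟨i, by simp⟩
      rw [e1] at ih
      obtain ⟨u, hu, v, hv, huv⟩ := Submodule.mem_sup.1 (i1 ih)
      obtain ⟨r, rfl⟩ := Ideal.mem_span_singleton'.1 hu
      have hc := usd_colon x husd (fun j => if j ∈ S then a else a + b)
        (by intro j; split_ifs <;> omega) i b (P * z - r * x i ^ a)
        (by convert hv using 1; linear_combination -huv)
      rw [e2]
      have := Ideal.add_mem _ (i2 hc) (Ideal.mul_mem_left _ (x i * r) i3)
      convert this using 1
      ring
  simpa [powersIdeal] using main Finset.univ

/-- let `(R,𝔪)` be an ℕ-graded isolated non-`F`-rational singularity with a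
homogeneous sop `x_1,…,x_d` forming a USD-sequence.  Present `H_𝔪^d(R)` as the direct limit
of the `R/(x_1^n,…,x_d^n)` along multiplication by `x_1⋯x_d`, with structure maps `ι`.
Then, after replacing `x` by a power (i.e. for some `N ≥ 1`), the tight closure of zero in
`H_𝔪^d(R)` equals `⋃_{n>0} Z_n(nδ)` where `Z_n = (x_1^n,…,x_d^n)^*/(x_1^n,…,x_d^n)^lim`
(realized inside `H_𝔪^d(R)` as the image under `ι` of the classes of `(x_1^n,…,x_d^n)^*`;
note `ι` kills `(x_1^n,…,x_d^n)^lim`). -/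
theorem stmt15 {K : Type} [Field K] {R : Type} [CommRing R] [Algebra K R]
    [Algebra.FiniteType K R] [IsReduced R]
    (p : ℕ) [Fact p.Prime] [CharP R p]
    (𝒜 : ℕ → Submodule K R) [GradedAlgebra 𝒜]
    (𝔪 : Ideal R) (h𝔪 : 𝔪 = (HomogeneousIdeal.irrelevant 𝒜).toIdeal)
    (d : ℕ) (hdim : ringKrullDim R = d)
    (hequi : ∀ P ∈ minimalPrimes R, ringKrullDim (R ⧸ P) = ringKrullDim R)
    (hiso : IsIsolatedNonFRational p 𝔪)
    (x : Fin d → R) (degs : Fin d → ℕ) (hhom : ∀ j, x j ∈ 𝒜 (degs j))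
    (hsop : (Ideal.span (Set.range x)).radical = 𝔪)
    (husd : IsUSDSequence x)
    -- the Čech/direct-limit presentation of the top local cohomology:
    (ι : ∀ n : ℕ, (R ⧸ powersIdeal x n) →ₗ[R]
      ((localCohomology 𝔪 d).obj (ModuleCat.of R R)))
    (hcomp : ∀ n m : ℕ, n ≤ m → ∀ z : R,
      ι n (Ideal.Quotient.mk (powersIdeal x n) z) =
        ι m (Ideal.Quotient.mk (powersIdeal x m) ((∏ j, x j) ^ (m - n) * z)))
    (hexh : ∀ h : ((localCohomology 𝔪 d).obj (ModuleCat.of R R)),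
      ∃ (n : ℕ) (z : R), n ≥ 1 ∧ h = ι n (Ideal.Quotient.mk (powersIdeal x n) z))
    (hker : ∀ (n : ℕ) (z : R), ι n (Ideal.Quotient.mk (powersIdeal x n) z) = 0 ↔
      ∃ m ≥ n, (∏ j, x j) ^ (m - n) * z ∈ powersIdeal x m) :
    ∃ N ≥ 1,
      {h : ((localCohomology 𝔪 d).obj (ModuleCat.of R R)) |
          ∃ (n : ℕ) (z : R), h = ι n (Ideal.Quotient.mk (powersIdeal x n) z) ∧
            ∃ c ∈ offMinimalPrimes R, ∃ e₀ : ℕ, ∀ e ≥ e₀,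
              ι (n * p ^ e) (Ideal.Quotient.mk (powersIdeal x (n * p ^ e))
                (c * z ^ p ^ e)) = 0} =
        {h : ((localCohomology 𝔪 d).obj (ModuleCat.of R R)) |
          ∃ n ≥ 1, ∃ z ∈ tightClosure p (powersIdeal x (N * n)),
            h = ι (N * n) (Ideal.Quotient.mk (powersIdeal x (N * n)) z)} := by
  classical
  haveI : IsNoetherianRing R := Algebra.FiniteType.isNoetherianRing K R
  refine ⟨1, le_rfl, ?_⟩
  ext h
  simp only [Set.mem_ofPred_eq]
  constructor
  · rintro ⟨n, z, rfl, c, hc, e₀, hz⟩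
    obtain ⟨w, hw, hXw⟩ := exists_complement (∏ j, x j)
    refine ⟨n + 1, by omega, (∏ j, x j) * z,
      ⟨c * (∏ j, x j + w), ?_, e₀, ?_⟩, ?_⟩
    · intro P hP hmem
      haveI : P.IsPrime := hP.1.1
      rcases this.mem_or_mem hmem with h1 | h1
      · exact hc P hP h1
      · exact hXw P hP h1
    · intro e he
      have hq : 1 ≤ p ^ e := Nat.one_le_pow _ _ (Fact.out : p.Prime).pos
      have h0 := hz e he
      rw [hcomp (n * p ^ e) ((n + 1) * p ^ e) (Nat.mul_le_mul_right _ (by omega)), hker] at h0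
      obtain ⟨m, hm, hmem⟩ := h0
      have hsub : (n + 1) * p ^ e - n * p ^ e = p ^ e := by
        rw [add_mul, one_mul, Nat.add_sub_cancel_left]
      rw [hsub] at hmem
      have hk := usd_key x husd ((n + 1) * p ^ e) (m - (n + 1) * p ^ e)
        (Nat.mul_pos (by omega) hq) _ (by rwa [Nat.add_sub_cancel' hm])
      rw [one_mul]
      apply powers_le_frob
      convert hk using 1
      obtain ⟨k, hk'⟩ : ∃ k, p ^ e = k + 1 := ⟨p ^ e - 1, by omega⟩
      rw [hk']
      rw [mul_pow, pow_succ (∏ j, x j)]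
      linear_combination (c * (∏ j, x j) ^ k * z ^ (k + 1)) * hw
    · rw [one_mul, hcomp n (n + 1) (by omega)]
      simp
  · rintro ⟨n, hn, z, ⟨c, hc, e₀, hz⟩, rfl⟩
    refine ⟨1 * n, z, rfl, c, hc, e₀, fun e he => ?_⟩
    rw [hker]
    refine ⟨1 * n * p ^ e, le_rfl, ?_⟩
    simpa using frob_le_powers p x (1 * n) e (hz e he)
end
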